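/- arXiv:1402.4559 — 14 statements merged into one kernel-verified Lean document; each statement's English description precedes it below -/
import Mathlib

section
/- Let R be a finite-dimensional algebra over a field k and let B : R × R → k be a nondegenerate associative bilinear form (associative means B(r*s, t) = B(r, s*t) for all r, s, t ∈ R). Then there exists a unique function σ : R → R satisfying B(r, s) = B(s, σ(r)) for all r, s ∈ R, and this σ is a k-algebra automorphism of R. -/
/-- If `B` is a nondegenerate associative bilinear form on a
finite-dimensional algebra `R` over a field `k`, then there is a unique function
`σ : R → R` with `B r s = B s (σ r)` for all `r s`, and this `σ` is a
`k`-algebra automorphism of `R` (the Nakayama automorphism). -/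
theorem nakayama_exists_unique_and_isAlgAut
    {k R : Type*} [Field k] [Ring R] [Algebra k R] [FiniteDimensional k R]
    (B : R →ₗ[k] R →ₗ[k] k)
    (hnd₁ : ∀ r : R, (∀ s : R, B r s = 0) → r = 0)
    (hnd₂ : ∀ s : R, (∀ r : R, B r s = 0) → s = 0)
    (hassoc : ∀ r s t : R, B (r * s) t = B r (s * t)) :
    (∃! σ : R → R, ∀ r s : R, B r s = B s (σ r)) ∧
      (∀ σ : R → R, (∀ r s : R, B r s = B s (σ r)) →
        ∃ e : R ≃ₐ[k] R, ⇑e = σ) := by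
  have ext : ∀ a b : R, (∀ s, B s a = B s b) → a = b := by
    intro a b h
    rw [← sub_eq_zero]
    apply hnd₂
    intro r
    rw [map_sub, h r, sub_self]
  have hinj : Function.Injective B.flip := by
    intro a b h
    apply ext
    intro s
    exact LinearMap.congr_fun h s
  have hsurj : Function.Surjective B.flip :=
    (LinearMap.injective_iff_surjective_of_finrank_eq_finrank
      (Subspace.dual_finrank_eq (K := k) (V := R)).symm).1 hinj
  refine ⟨?_, ?_⟩
  · choose σ hσ using fun r : R => hsurj (B r)
    have h : ∀ r s : R, B r s = B s (σ r) := fun r s => by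
      rw [← hσ r, LinearMap.flip_apply]
    refine ⟨σ, h, ?_⟩
    intro τ hτ
    funext r
    apply ext
    intro s
    rw [← h, ← hτ r s]
  · intro σ h
    have hadd : ∀ a b, σ (a + b) = σ a + σ b := by
      intro a b
      apply ext
      intro s
      rw [← h, map_add, map_add, LinearMap.add_apply, h a, h b]
    have hsmul : ∀ (c : k) a, σ (c • a) = c • σ a := by
      intro c a
      apply ext
      intro s
      rw [← h, map_smul, map_smul, LinearMap.smul_apply, h a]
    have hmul : ∀ a b, σ (a * b) = σ a * σ b := by
      intro a b
      apply ext
      intro s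
      rw [← h, hassoc, h a, hassoc, h b, hassoc]
    have hone : σ 1 = 1 := by
      apply ext
      intro s
      have := hassoc 1 s 1
      rw [one_mul, mul_one] at this
      rw [← h, this]
    let L : R →ₗ[k] R := { toFun := σ, map_add' := hadd, map_smul' := hsmul }
    have hLi : Function.Injective L := by
      rw [injective_iff_map_eq_zero]
      intro a ha
      apply hnd₁
      intro s
      have ha' : σ a = 0 := ha
      rw [h, ha', map_zero]
    have hLs : Function.Surjective L := LinearMap.injective_iff_surjective.1 hLi
    exact ⟨AlgEquiv.ofBijective (AlgHom.ofLinearMap L hone hmul) ⟨hLi, hLs⟩, rfl⟩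
end

section
/- Let R be a ring that is a finite-dimensional algebra over a field k₁ and also a finite-dimensional algebra over a field k₂, and suppose R is a local ring. Let λ₁ : R → k₁ be a k₁-linear functional whose kernel contains no nonzero left ideals of R, and let σ : R → R be a ring automorphism satisfying λ₁(r*s) = λ₁(s * σ(r)) for all r, s ∈ R. Then there exists a k₂-linear functional λ₂ : R → k₂ whose kernel contains no nonzero left ideals of R and which satisfies λ₂(r*s) = λ₂(s * σ(r)) for all r, s ∈ R. -/
/-- Let `R` be a local ring that is a finite-dimensional algebra over
fields `k₁` and `k₂`.  If `λ₁ : R → k₁` is a `k₁`-linear Frobenius functional (its kernel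
contains no nonzero left ideals) with Nakayama automorphism `σ`, then there is a
`k₂`-linear Frobenius functional `λ₂ : R → k₂` with the same Nakayama automorphism `σ`. -/
theorem local_nakayama_independent_of_field
    {k₁ k₂ R : Type*} [Field k₁] [Field k₂] [Ring R]
    [Algebra k₁ R] [Algebra k₂ R]
    [FiniteDimensional k₁ R] [FiniteDimensional k₂ R]
    [IsLocalRing R]
    (lam₁ : R →ₗ[k₁] k₁)
    (hlam₁ : ∀ I : Ideal R, (I : Set R) ⊆ {x | lam₁ x = 0} → I = ⊥)
    (σ : R ≃+* R) (hσ : ∀ r s : R, lam₁ (r * s) = lam₁ (s * σ r)) :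
    ∃ lam₂ : R →ₗ[k₂] k₂,
      (∀ I : Ideal R, (I : Set R) ⊆ {x | lam₂ x = 0} → I = ⊥) ∧
      (∀ r s : R, lam₂ (r * s) = lam₂ (s * σ r)) := by
  classical
  -- nondegeneracy
  have nd : ∀ y : R, (∀ s : R, lam₁ (s * y) = 0) → y = 0 := by
    intro y hy
    have h := hlam₁ (Ideal.span {y}) (by
      intro z hz
      obtain ⟨s, rfl⟩ := Ideal.mem_span_singleton'.1 hz
      exact hy s)
    simpa using h
  -- a minimal left ideal
  haveI : IsArtinianRing R := IsArtinianRing.of_finite k₁ R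
  obtain ⟨L, hL, -⟩ := (IsAtomic.eq_bot_or_exists_atom_le (⊤ : Ideal R)).resolve_left top_ne_bot
  obtain ⟨x, hxL, hx⟩ : ∃ x ∈ L, lam₁ x ≠ 0 := by
    by_contra! h
    exact hL.1 (hlam₁ L (fun z hz => h z hz))
  have hx0 : x ≠ 0 := by
    rintro rfl
    simp at hx
  have hinv : ∀ a : R, a * x ≠ 0 → ∃ c, a * c = 1 := by
    intro a ha
    have hle : Ideal.span {a * x} ≤ L := by
      rw [Ideal.span_singleton_le_iff_mem]
      exact L.mul_mem_left a hxL
    have heq : Ideal.span {a * x} = L :=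
      (hL.le_iff.1 hle).resolve_left (by simpa using ha)
    rw [← heq] at hxL
    obtain ⟨b, hb⟩ := Ideal.mem_span_singleton'.1 hxL
    have hu : IsUnit (b * a) := by
      refine (IsLocalRing.isUnit_or_isUnit_of_add_one
        (show b * a + (1 - b * a) = 1 by abel)).resolve_right ?_
      intro hu
      apply hx0
      rw [← hu.mul_right_eq_zero, sub_mul, one_mul, mul_assoc, hb, sub_self]
    have hinj : Function.Injective (LinearMap.mulLeft k₁ a) := by
      rw [← LinearMap.ker_eq_bot, LinearMap.ker_eq_bot']
      intro m hm
      rw [LinearMap.mulLeft_apply] at hm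
      rw [← hu.mul_right_eq_zero, mul_assoc, hm, mul_zero]
    obtain ⟨c, hc⟩ := LinearMap.surjective_of_injective hinj 1
    exact ⟨c, hc⟩
  -- every functional is of the form `lam₁ (a * ·)`
  have hrep : ∀ f : R →ₗ[k₁] k₁, ∃ a : R, ∀ s, f s = lam₁ (a * s) := by
    let Φ : R →ₗ[k₁] Module.Dual k₁ R := (LinearMap.mul k₁ R).compr₂ lam₁
    have hΦ : ∀ a s, Φ a s = lam₁ (a * s) := fun a s => rfl
    have hinj : Function.Injective Φ := by
      rw [← LinearMap.ker_eq_bot, LinearMap.ker_eq_bot']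
      intro a ha
      have : σ a = 0 := nd _ (fun s => by rw [← hσ, ← hΦ, ha]; rfl)
      simpa using this
    have hsurj : Function.Surjective Φ :=
      (LinearMap.injective_iff_surjective_of_finrank_eq_finrank
        (Subspace.dual_finrank_eq (K := k₁) (V := R)).symm).1 hinj
    intro f
    obtain ⟨a, ha⟩ := hsurj f
    exact ⟨a, fun s => by rw [← hΦ, ha]⟩
  have hmem : ∀ y : R, y ≠ 0 → ∃ r, r * y = x := by
    intro y hy
    by_contra hcon
    have hxn : x ∉ LinearMap.range (LinearMap.mulRight k₁ y) := by
      rintro ⟨r, hr⟩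
      exact hcon ⟨r, hr⟩
    obtain ⟨f, hf, hf0⟩ := Submodule.exists_le_ker_of_notMem hxn
    obtain ⟨a, ha⟩ := hrep f
    obtain ⟨c, hc⟩ := hinv a (by
      intro h
      apply hf
      rw [ha, h, map_zero])
    apply hy
    apply nd
    intro s
    have h1 : f (c * s * y) = 0 := hf0 ⟨c * s, rfl⟩
    rw [ha, mul_assoc, ← mul_assoc, hc, one_mul] at h1
    exact h1
  -- the twisted commutator space
  let C : AddSubgroup R := AddSubgroup.closure {z | ∃ r s : R, z = r * s - s * σ r}
  let C₂ : Submodule k₂ R :=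
    { C with
      smul_mem' := by
        intro t z hz
        change z ∈ C at hz
        change t • z ∈ C
        induction hz using AddSubgroup.closure_induction with
        | mem z hz =>
          obtain ⟨r, s, rfl⟩ := hz
          refine AddSubgroup.subset_closure ⟨r, t • s, ?_⟩
          rw [smul_sub, mul_smul_comm, smul_mul_assoc]
        | zero => rw [smul_zero]; exact C.zero_mem
        | add u v _ _ hu hv => rw [smul_add]; exact C.add_mem hu hv
        | neg u _ hu => rw [smul_neg]; exact C.neg_mem hu }
  have hC : ∀ z ∈ C, lam₁ z = 0 := by
    intro z hz
    induction hz using AddSubgroup.closure_induction with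
    | mem z hz =>
      obtain ⟨r, s, rfl⟩ := hz
      rw [map_sub, hσ, sub_self]
    | zero => exact map_zero _
    | add u v _ _ hu hv => rw [map_add, hu, hv, add_zero]
    | neg u _ hu => rw [map_neg, hu, neg_zero]
  have hxC : x ∉ C₂ := fun h => hx (hC x h)
  obtain ⟨g, hg, hg0⟩ := Submodule.exists_le_ker_of_notMem hxC
  refine ⟨g, ?_, ?_⟩
  · intro I hI
    by_contra hne
    obtain ⟨y, hyI, hy⟩ := Submodule.exists_mem_ne_zero_of_ne_bot hne
    obtain ⟨r, hr⟩ := hmem y hy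
    exact hg (hI (hr ▸ I.mul_mem_left r hyI))
  · intro r s
    have h : r * s - s * σ r ∈ C₂ := AddSubgroup.subset_closure ⟨r, s, rfl⟩
    have h2 : g (r * s - s * σ r) = 0 := hg0 h
    rwa [map_sub, sub_eq_zero] at h2
end

section
/- Let R be a finite-dimensional algebra over a field k and suppose R is a local ring. Then R is a symmetric k-algebra (there exists a k-linear functional λ : R → k with λ(r*s) = λ(s*r) for all r, s and whose kernel contains no nonzero left ideals of R) if and only if R is a Frobenius k-algebra (there exists a k-linear functional whose kernel contains no nonzero left ideals of R) and the left socle soc(_R R) is not contained in the commutator subgroup [R,R]. -/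
/-- The left socle of a ring `R`: the sum of all simple left ideals of `R`. -/
def leftSocle (R : Type*) [Ring R] : Ideal R :=
  sSup {I : Ideal R | IsSimpleModule R I}

/-- The additive subgroup `[R,R]` of `R` generated by all commutators `r*s - s*r`. -/
def commutatorSubgroup (R : Type*) [Ring R] : AddSubgroup R :=
  AddSubgroup.closure {x : R | ∃ r s : R, x = r * s - s * r}

theorem aux_atom {R : Type*} [Ring R] {T : Ideal R} (hT : IsAtom T) {y z : R} (hy : y ∈ T)
    (hz : z ∈ T) (h0 : z ≠ 0) : ∃ r, r * z = y := by
  have h : Ideal.span {z} = T := by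
    rcases hT.le_iff.1 ((Ideal.span_singleton_le_iff_mem (I := T)).2 hz) with h | h
    · exact absurd (Ideal.span_singleton_eq_bot.1 h) h0
    · exact h
  rw [← h] at hy
  exact Ideal.mem_span_singleton'.1 hy

theorem aux_ann {R : Type*} [Ring R] [IsLocalRing R] {x n : R} (hx : x ≠ 0) (hn : n * x = 0)
    {y : R} (hy : y ∈ leftSocle R) : n * y = 0 := by
  unfold leftSocle at hy
  rw [sSup_eq_iSup'] at hy
  induction hy using Submodule.iSup_induction' with
  | mem T y hy =>
    have hT : IsAtom T.1 := isSimpleModule_iff_isAtom.1 T.2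
    by_contra h
    obtain ⟨r, hr⟩ := aux_atom hT hy (T.1.mul_mem_left n hy) h
    rcases IsLocalRing.isUnit_or_isUnit_of_add_one (a := r * n) (b := 1 - r * n) (by simp) with u | u
    · exact hx ((u.mul_right_eq_zero).1 (by rw [mul_assoc, hn, mul_zero]))
    · have : y = 0 := (u.mul_right_eq_zero).1 (by rw [sub_mul, mul_assoc, hr, one_mul, sub_self])
      exact h (by rw [this, mul_zero])
  | zero => simp
  | add a b _ _ ha hb => rw [mul_add, ha, hb, add_zero]

theorem aux_comm (k : Type*) {R : Type*} [Field k] [Ring R] [Algebra k R] (c : k) {x : R}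
    (hx : x ∈ commutatorSubgroup R) : c • x ∈ commutatorSubgroup R := by
  unfold commutatorSubgroup at *
  induction hx using AddSubgroup.closure_induction with
  | mem x hx =>
    obtain ⟨r, s, rfl⟩ := hx
    exact AddSubgroup.subset_closure ⟨c • r, s, by simp [smul_sub]⟩
  | zero => simp
  | add a b _ _ ha hb => rw [smul_add]; exact add_mem ha hb
  | neg a _ ha => rw [smul_neg]; exact neg_mem ha

/-- The commutator subgroup as a subspace. -/
def commSub (k R : Type*) [Field k] [Ring R] [Algebra k R] : Submodule k R :=
  { commutatorSubgroup R with smul_mem' := fun c _ hx => aux_comm k c hx }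

theorem aux_soc {k R : Type*} [Field k] [Ring R] [Algebra k R] [FiniteDimensional k R]
    [IsLocalRing R] (lam : R →ₗ[k] k)
    (hl : ∀ I : Ideal R, (I : Set R) ⊆ {x | lam x = 0} → I = ⊥) {x : R} (hx : x ≠ 0)
    (hxs : x ∈ leftSocle R) {y : R} (hy : y ∈ leftSocle R) : ∃ r, r * x = y := by
  let f : R →ₗ[k] R := LinearMap.mulRight k x
  let soc : Submodule k R := (leftSocle R).restrictScalars k
  let g : soc →ₗ[k] (LinearMap.ker f).dualAnnihilator :=
    LinearMap.codRestrict _ ((LinearMap.mk₂ k (fun y t : R => lam (t * y))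
      (by intros; simp [mul_add]) (by intros; simp) (by intros; simp [add_mul])
      (by intros; simp)).comp soc.subtype) (by
        intro z
        rw [Submodule.mem_dualAnnihilator]
        intro n hn
        have : n * z.1 = 0 := aux_ann hx (by simpa [f] using hn) z.2
        simp [this])
  have hg : Function.Injective g := by
    refine (injective_iff_map_eq_zero g).2 fun z hz => ?_
    have h1 : ∀ t, lam (t * z.1) = 0 := fun t =>
      congrArg (fun w : (LinearMap.ker f).dualAnnihilator => w.1 t) hz
    have h2 := hl (Ideal.span {z.1}) (by
      intro w hw
      obtain ⟨a, rfl⟩ := Ideal.mem_span_singleton'.1 hw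
      exact h1 a)
    exact Subtype.ext (Ideal.span_singleton_eq_bot.1 h2)
  have e1 := LinearMap.finrank_le_finrank_of_injective hg
  have e2 := Subspace.finrank_add_finrank_dualAnnihilator_eq (LinearMap.ker f)
  have e3 := LinearMap.finrank_range_add_finrank_ker f
  have hle : LinearMap.range f ≤ soc := by
    rintro _ ⟨r, rfl⟩
    exact (leftSocle R).mul_mem_left r hxs
  have e := Submodule.eq_of_le_of_finrank_le hle (by omega)
  have : y ∈ LinearMap.range f := by rw [e]; exact hy
  obtain ⟨r, hr⟩ := this
  exact ⟨r, hr⟩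

theorem aux_exists (k : Type*) {R : Type*} [Field k] [Ring R] [Algebra k R] [FiniteDimensional k R]
    {I : Ideal R} (hI : I ≠ ⊥) : ∃ T : Ideal R, IsAtom T ∧ T ≤ I ∧ T ≤ leftSocle R := by
  haveI : IsArtinianRing R := IsArtinianRing.of_finite k R
  obtain ⟨T, hT, hle⟩ := (IsAtomic.eq_bot_or_exists_atom_le I).resolve_left hI
  exact ⟨T, hT, hle, le_sSup (isSimpleModule_iff_isAtom.2 hT)⟩

/-- A local finite-dimensional algebra `R` over a field `k` is a symmetric
`k`-algebra iff it is a Frobenius `k`-algebra and the left socle of `R` is not contained in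
the commutator subgroup `[R,R]`. -/
theorem local_symmetric_iff_frobenius_and_socle_not_subset_commutators
    {k R : Type*} [Field k] [Ring R] [Algebra k R] [FiniteDimensional k R]
    [IsLocalRing R] :
    (∃ lam : R →ₗ[k] k, (∀ r s : R, lam (r * s) = lam (s * r)) ∧
        ∀ I : Ideal R, (I : Set R) ⊆ {x | lam x = 0} → I = ⊥) ↔
      ((∃ lam : R →ₗ[k] k, ∀ I : Ideal R, (I : Set R) ⊆ {x | lam x = 0} → I = ⊥) ∧
        ¬ ((leftSocle R : Set R) ⊆ (commutatorSubgroup R : Set R))) := by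
  constructor
  · rintro ⟨lam, hs, hl⟩
    refine ⟨⟨lam, hl⟩, fun hsub => ?_⟩
    obtain ⟨T, hT, -, hTs⟩ := aux_exists k (R := R) (I := ⊤) top_ne_bot
    refine hT.1 (hl T fun x hx => ?_)
    have hx' : x ∈ commutatorSubgroup R := hsub (hTs hx)
    have : commutatorSubgroup R ≤ lam.toAddMonoidHom.ker := by
      unfold commutatorSubgroup
      rw [AddSubgroup.closure_le]
      rintro _ ⟨r, s, rfl⟩
      change lam (r * s - s * r) = 0
      rw [map_sub, hs, sub_self]
    exact this hx'
  · rintro ⟨⟨lam, hl⟩, hn⟩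
    obtain ⟨y, hy, hyc⟩ := Set.not_subset.1 hn
    have hyc' : y ∉ commSub k R := hyc
    obtain ⟨mu, hmu, hle⟩ := Submodule.exists_le_ker_of_notMem hyc'
    refine ⟨mu, fun r s => ?_, fun I hI => ?_⟩
    · have : r * s - s * r ∈ commSub k R := AddSubgroup.subset_closure ⟨r, s, rfl⟩
      have := hle this
      rwa [LinearMap.mem_ker, map_sub, sub_eq_zero] at this
    · by_contra h
      obtain ⟨T, hT, hTI, hTs⟩ := aux_exists k h
      obtain ⟨x, hx, hx0⟩ := Submodule.exists_mem_ne_zero_of_ne_bot hT.1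
      obtain ⟨r, rfl⟩ := aux_soc lam hl hx0 (hTs hx) hy
      exact hmu (hI (I.mul_mem_left r (hTI hx)))
end

section
/- Let k₂ ⊆ k₁ be fields with k₁ finite-dimensional as a k₂-vector space, and let R be a finite-dimensional k₁-algebra, regarded also as a k₂-algebra by restriction of scalars. Let λ₁ : R → k₁ be a k₁-linear functional whose kernel contains no nonzero left ideals of R, and let σ : R → R be a ring automorphism satisfying λ₁(r*s) = λ₁(s * σ(r)) for all r, s ∈ R. Then there exists a k₂-linear functional λ₂ : R → k₂ whose kernel contains no nonzero left ideals of R and which satisfies λ₂(r*s) = λ₂(s * σ(r)) for all r, s ∈ R. -/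
/-- Let `k₂ ⊆ k₁` be fields with `k₁` finite-dimensional over `k₂`, and let
`R` be a finite-dimensional `k₁`-algebra (hence a `k₂`-algebra by restriction of scalars).
If `λ₁ : R → k₁` is a `k₁`-linear Frobenius functional with Nakayama automorphism `σ`, then
there is a `k₂`-linear Frobenius functional `λ₂ : R → k₂` with the same Nakayama
automorphism `σ`. -/
theorem nakayama_independent_of_field_of_finite_extension
    {k₂ k₁ R : Type*} [Field k₂] [Field k₁] [Algebra k₂ k₁] [FiniteDimensional k₂ k₁]
    [Ring R] [Algebra k₁ R] [Algebra k₂ R] [IsScalarTower k₂ k₁ R]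
    [FiniteDimensional k₁ R]
    (lam₁ : R →ₗ[k₁] k₁)
    (hlam₁ : ∀ I : Ideal R, (I : Set R) ⊆ {x | lam₁ x = 0} → I = ⊥)
    (σ : R ≃+* R) (hσ : ∀ r s : R, lam₁ (r * s) = lam₁ (s * σ r)) :
    ∃ lam₂ : R →ₗ[k₂] k₂,
      (∀ I : Ideal R, (I : Set R) ⊆ {x | lam₂ x = 0} → I = ⊥) ∧
      (∀ r s : R, lam₂ (r * s) = lam₂ (s * σ r)) := by
  obtain ⟨f, hf⟩ : ∃ f : Module.Dual k₂ k₁, f 1 ≠ 0 := by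
    by_contra! h
    exact one_ne_zero ((Module.forall_dual_apply_eq_zero_iff k₂ (1 : k₁)).1 h)
  refine ⟨f ∘ₗ lam₁.restrictScalars k₂, fun I hI => hlam₁ I fun x hx => ?_, fun r s => ?_⟩
  · by_contra hc
    have hc' : lam₁ x ≠ 0 := hc
    have hmem : algebraMap k₁ R (lam₁ x)⁻¹ * x ∈ I := I.mul_mem_left _ hx
    have h0 : f (lam₁ (algebraMap k₁ R (lam₁ x)⁻¹ * x)) = 0 := hI hmem
    rw [← Algebra.smul_def, map_smul, smul_eq_mul, inv_mul_cancel₀ hc'] at h0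
    exact hf h0
  · change f (lam₁ (r * s)) = f (lam₁ (s * σ r))
    rw [hσ]
end

section
/- Let V be a finite-dimensional vector space over a field k, let n be a positive integer such that k has at least n elements, and suppose V is the internal direct sum of subspaces V₁, ..., Vₙ. Let U be a subspace of V such that Vᵢ is not contained in U for each i = 1, ..., n. Then there exists a subspace U' of V of codimension 1 (a hyperplane) with U ⊆ U' and such that Vᵢ is not contained in U' for each i = 1, ..., n. -/
theorem exists_dual_aux {k W ι : Type*} [Field k] [AddCommGroup W] [Module k W]
    (w : ι → W) (hw : ∀ i, w i ≠ 0) (s : Finset ι) :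
    (s.card : Cardinal) ≤ Cardinal.mk k → ∃ f : Module.Dual k W, ∀ i ∈ s, f (w i) ≠ 0 := by
  classical
  induction s using Finset.induction_on with
  | empty => intro _; exact ⟨0, by simp⟩
  | insert j s hj ih =>
    intro hc
    rw [Finset.card_insert_of_notMem hj] at hc
    have hlt : (s.card : Cardinal) < Cardinal.mk k :=
      lt_of_lt_of_le (by exact_mod_cast Nat.lt_succ_self _) hc
    obtain ⟨f, hf⟩ := ih hlt.le
    by_cases hfj : f (w j) = 0
    · obtain ⟨g, hg⟩ : ∃ g : Module.Dual k W, g (w j) ≠ 0 := by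
        by_contra! h
        exact hw j ((Module.forall_dual_apply_eq_zero_iff k _).1 h)
      obtain ⟨c, hcT⟩ : ∃ c : k, c ∉ s.image (fun i => - g (w i) / f (w i)) := by
        by_contra! h
        have h1 : Cardinal.mk k ≤ ((s.image (fun i => - g (w i) / f (w i))).card : Cardinal) := by
          rw [← Cardinal.mk_coe_finset, ← Cardinal.mk_univ]
          exact Cardinal.mk_le_mk_of_subset (fun x _ => h x)
        have h2 : ((s.image (fun i => - g (w i) / f (w i))).card : Cardinal) ≤ s.card := by
          exact_mod_cast Finset.card_image_le
        exact absurd (h1.trans h2) (not_le.2 hlt)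
      refine ⟨g + c • f, fun i hi => ?_⟩
      rcases Finset.mem_insert.1 hi with rfl | hi
      · simpa [hfj] using hg
      · intro h
        apply hcT
        refine Finset.mem_image.2 ⟨i, hi, ?_⟩
        rw [div_eq_iff (hf i hi)]
        simp only [LinearMap.add_apply, LinearMap.smul_apply, smul_eq_mul] at h
        linear_combination -h
    · refine ⟨f, fun i hi => ?_⟩
      rcases Finset.mem_insert.1 hi with rfl | hi
      · exact hfj
      · exact hf i hi

/-- **Lemma on hyperplanes.** Let `V` be a finite-dimensional vector space
over a field `k` with at least `n` elements, decomposed as an internal direct sum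
`V = V₁ ⊕ ⋯ ⊕ Vₙ` with `n ≥ 1`.  If `U` is a subspace with `Vᵢ ⊄ U` for all `i`, then `U`
can be enlarged to a hyperplane `U'` (a subspace of codimension 1) with `Vᵢ ⊄ U'` for
all `i`. -/
theorem extend_to_hyperplane_avoiding_summands
    {k V : Type*} [Field k] [AddCommGroup V] [Module k V] [FiniteDimensional k V]
    (n : ℕ) (hn : 0 < n) (hcard : (n : Cardinal) ≤ Cardinal.mk k)
    (Vi : Fin n → Submodule k V)
    (hindep : iSupIndep Vi) (hsum : ⨆ i, Vi i = ⊤)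
    (U : Submodule k V) (hU : ∀ i, ¬ Vi i ≤ U) :
    ∃ U' : Submodule k V, U ≤ U' ∧ Module.finrank k (V ⧸ U') = 1 ∧
      ∀ i, ¬ Vi i ≤ U' := by
  have h : ∀ i, ∃ v ∈ Vi i, v ∉ U := fun i => Set.not_subset.1 (hU i)
  choose v hv hvU using h
  obtain ⟨f, hf⟩ := exists_dual_aux (k := k) (fun i => U.mkQ (v i)) (fun i h => hvU i (by simpa using h))
    Finset.univ (by simpa using hcard)
  have hf' : ∀ i, (f.comp U.mkQ) (v i) ≠ 0 := fun i => hf i (Finset.mem_univ i)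
  refine ⟨LinearMap.ker (f.comp U.mkQ), ?_, ?_, ?_⟩
  · intro x hx
    simp [(Submodule.Quotient.mk_eq_zero U).2 hx]
  · have hs : Function.Surjective (f.comp U.mkQ) :=
      LinearMap.surjective (fun h => hf' ⟨0, hn⟩ (by rw [h]; rfl))
    rw [((f.comp U.mkQ).quotKerEquivOfSurjective hs).finrank_eq, Module.finrank_self]
  · intro i hle
    exact hf' i (LinearMap.mem_ker.1 (hle (hv i)))
end

section
/- Let D be a division ring, n a positive integer, and S = Mₙ(D) the ring of n × n matrices over D. If I is any nonzero left ideal of S, then I + [S,S] = S; that is, every element of S is the sum of an element of I and an element of the additive subgroup generated by commutators. Equivalently, the additive subgroup of S generated by I together with all elements a*b − b*a (a, b ∈ S) is all of S. -/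
/-- **Lemma on matrix rings.** Let `D` be a division ring, `n ≥ 1`, and
`S = Mₙ(D)`.  For every nonzero left ideal `I` of `S` one has `I + [S,S] = S`:
the additive subgroup generated by `I` together with all commutators `a*b - b*a`
is all of `S`. -/
theorem nonzero_left_ideal_sup_commutators_eq_top
    {D : Type*} [DivisionRing D] {n : ℕ} (hn : 0 < n)
    (I : Ideal (Matrix (Fin n) (Fin n) D)) (hI : I ≠ ⊥) :
    AddSubgroup.closure
        ((I : Set (Matrix (Fin n) (Fin n) D)) ∪
          {x | ∃ a b : Matrix (Fin n) (Fin n) D, x = a * b - b * a}) = ⊤ := by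
  obtain ⟨x, hx, hx0⟩ := Submodule.exists_mem_ne_zero_of_ne_bot hI
  obtain ⟨p, q, hpq⟩ : ∃ p q, x p q ≠ 0 := by
    by_contra! h
    exact hx0 (Matrix.ext h)
  have key : ∀ s t : Matrix (Fin n) (Fin n) D, s * x * t ∈ AddSubgroup.closure
        ((I : Set (Matrix (Fin n) (Fin n) D)) ∪
          {x | ∃ a b : Matrix (Fin n) (Fin n) D, x = a * b - b * a}) := by
    intro s t
    have h1 : s * x * t = ((s * x) * t - t * (s * x)) + t * (s * x) := by abel
    rw [h1]
    refine add_mem (AddSubgroup.subset_closure (Or.inr ⟨_, _, rfl⟩))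
      (AddSubgroup.subset_closure (Or.inl ?_))
    exact I.mul_mem_left _ (I.mul_mem_left _ hx)
  rw [eq_top_iff]
  intro m _
  rw [Matrix.matrix_eq_sum_single m]
  refine sum_mem fun i _ => sum_mem fun j _ => ?_
  have h2 : Matrix.single i j (m i j) =
      Matrix.single i p (m i j * (x p q)⁻¹) * x * Matrix.single q j 1 := by
    rw [Matrix.single_mul_mul_single]
    simp [mul_assoc, hpq]
  rw [h2]
  exact key _ _
end

section
/- Let R be a ring that is a finite-dimensional algebra over a field k₁ and also a finite-dimensional algebra over a field k₂, where both k₁ and k₂ are infinite. Let λ₁ : R → k₁ be a k₁-linear functional whose kernel contains no nonzero left ideals of R, and let σ : R → R be a ring automorphism satisfying λ₁(r*s) = λ₁(s * σ(r)) for all r, s ∈ R. Then there exists a k₂-linear functional λ₂ : R → k₂ whose kernel contains no nonzero left ideals of R and which satisfies λ₂(r*s) = λ₂(s * σ(r)) for all r, s ∈ R. -/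
theorem nak_key {k₁ k₂ Z Q : Type*} [Field k₁] [Field k₂] [Infinite k₂] [CommRing Z]
    [Algebra k₁ Z] [Algebra k₂ Z] [AddCommGroup Q] [Module Z Q] [Module k₁ Q] [Module k₂ Q]
    [IsScalarTower k₁ Z Q] [IsScalarTower k₂ Z Q]
    [FiniteDimensional k₁ Z] [FiniteDimensional k₁ Q]
    (l : Q →ₗ[k₁] k₁) (hl : ∀ x : Q, (∀ z : Z, l (z • x) = 0) → x = 0) :
    ∃ m : Q →ₗ[k₂] k₂, ∀ x : Q, (∀ z : Z, m (z • x) = 0) → x = 0 := by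
  have hZ : IsArtinianRing Z := IsArtinianRing.of_finite k₁ Z
  have hQ : Module.Finite Z Q := Module.Finite.of_restrictScalars_finite k₁ Z Q
  let P := {p : PrimeSpectrum Z // ∃ e : Q, e ≠ 0 ∧ ∀ z ∈ p.asIdeal, z • e = 0}
  have hP : Finite P := inferInstance
  choose e he0 he using fun p : P => p.2
  obtain ⟨m, hm⟩ := Module.exists_dual_forall_apply_ne_zero (K := k₂) e he0
  refine ⟨m, fun x hx => ?_⟩
  by_contra hx0
  have hne : Submodule.span Z {x} ≠ ⊥ := by simpa using hx0
  obtain ⟨S, hS, hSx⟩ := (eq_bot_or_exists_atom_le (Submodule.span Z {x})).resolve_left hne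
  obtain ⟨y, hyS, hy0⟩ := Submodule.exists_mem_ne_zero_of_ne_bot hS.1
  have hSs : IsSimpleModule Z S := isSimpleModule_iff_isAtom.2 hS
  have hy0' : (⟨y, hyS⟩ : S) ≠ 0 := by simpa using hy0
  have hmax := IsSimpleModule.ker_toSpanSingleton_isMaximal Z hy0'
  set I : Ideal Z := LinearMap.ker (LinearMap.toSpanSingleton Z S ⟨y, hyS⟩) with hI
  have hIm : ∀ z, z ∈ I ↔ z • y = 0 := by
    intro z
    rw [hI, LinearMap.mem_ker, LinearMap.toSpanSingleton_apply, Subtype.ext_iff]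
    simp
  let p : P := ⟨⟨I, hmax.isPrime⟩, y, hy0, fun z hz => (hIm z).1 hz⟩
  have hep : ∀ z ∈ I, z • e p = 0 := he p
  -- the multiples of y exhaust everything killed by I
  letI : Field (Z ⧸ I) := Ideal.Quotient.field I
  have hfd : FiniteDimensional k₁ (Z ⧸ I) :=
    Module.Finite.of_surjective (Ideal.Quotient.mkₐ k₁ I).toLinearMap
      (Ideal.Quotient.mkₐ_surjective k₁ I)
  let F : ∀ w : Q, (∀ z ∈ I, z • w = 0) → ((Z ⧸ I) →ₗ[k₁] k₁) := fun w hw =>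
    (Submodule.liftQ (I.restrictScalars k₁)
      (l ∘ₗ ((LinearMap.toSpanSingleton Z Q w).restrictScalars k₁))
      (by intro z hz; simp [hw z hz]))
  have hF : ∀ w hw z, F w hw (Ideal.Quotient.mk I z) = l (z • w) := fun w hw z => rfl
  let f := F y (fun z hz => (hIm z).1 hz)
  let g := F (e p) hep
  let T : (Z ⧸ I) →ₗ[k₁] Module.Dual k₁ (Z ⧸ I) :=
    (LinearMap.mul k₁ (Z ⧸ I)).compr₂ f
  have hT : Function.Injective T := by
    rw [injective_iff_map_eq_zero]
    intro a ha
    by_contra ha0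
    apply hy0
    apply hl
    intro z
    rw [← hF y (fun z hz => (hIm z).1 hz)]
    have := LinearMap.congr_fun ha (a⁻¹ * Ideal.Quotient.mk I z)
    simpa [T, mul_inv_cancel_left₀ ha0] using this
  have hTs : Function.Surjective T :=
    (LinearMap.injective_iff_surjective_of_finrank_eq_finrank
      (Subspace.dual_finrank_eq).symm).1 hT
  obtain ⟨c, hc⟩ := hTs g
  obtain ⟨c, rfl⟩ := Ideal.Quotient.mk_surjective c
  have hey : e p = c • y := by
    rw [← sub_eq_zero]
    apply hl
    intro z
    have := LinearMap.congr_fun hc (Ideal.Quotient.mk I z)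
    have h2 : f (Ideal.Quotient.mk I (c * z)) = g (Ideal.Quotient.mk I z) := by
      simpa [T] using this
    have h3 : l ((c * z) • y) = l (z • e p) := h2
    rw [smul_sub, map_sub, ← h3, smul_smul, mul_comm, sub_self]
  obtain ⟨d, rfl⟩ := Submodule.mem_span_singleton.1 (hSx hyS)
  apply hm p
  rw [hey, smul_smul]
  exact hx _

theorem nak_center {k₁ k₂ Z R : Type*} [Field k₁] [Field k₂] [Infinite k₂] [CommRing Z] [Ring R]
    [Algebra k₁ R] [Algebra k₂ R] [Algebra Z R] [Algebra k₁ Z] [Algebra k₂ Z]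
    [IsScalarTower k₁ Z R] [IsScalarTower k₂ Z R]
    [FiniteDimensional k₁ R] [FiniteDimensional k₁ Z]
    (lam₁ : R →ₗ[k₁] k₁)
    (hlam₁ : ∀ I : Ideal R, (I : Set R) ⊆ {x | lam₁ x = 0} → I = ⊥)
    (σ : R ≃+* R) (hσ : ∀ r s : R, lam₁ (r * s) = lam₁ (s * σ r)) :
    ∃ lam₂ : R →ₗ[k₂] k₂,
      (∀ I : Ideal R, (I : Set R) ⊆ {x | lam₂ x = 0} → I = ⊥) ∧
      (∀ r s : R, lam₂ (r * s) = lam₂ (s * σ r)) := by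
  let N : Submodule Z R :=
    { carrier := {x | ∀ z : Z, lam₁ (z • x) = 0}
      add_mem' := fun {a b} ha hb z => by
        rw [smul_add, map_add, ha z, hb z, add_zero]
      zero_mem' := fun z => by simp
      smul_mem' := fun c x hx z => by rw [smul_smul]; exact hx _ }
  have hN : ∀ x, x ∈ N ↔ ∀ z : Z, lam₁ (z • x) = 0 := fun x => Iff.rfl
  let l : (R ⧸ N) →ₗ[k₁] k₁ := Submodule.liftQ (N.restrictScalars k₁) lam₁ (by
    intro x hx
    have := (hN x).1 hx 1
    simpa using this)
  have hl : ∀ x, l (N.mkQ x) = lam₁ x := fun x => rfl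
  have hfd : FiniteDimensional k₁ (R ⧸ N) :=
    Module.Finite.of_surjective (N.mkQ.restrictScalars k₁) N.mkQ_surjective
  obtain ⟨m, hm⟩ := nak_key (k₂ := k₂) (Z := Z) l (by
    intro x hx
    obtain ⟨x, rfl⟩ := N.mkQ_surjective x
    rw [Submodule.mkQ_apply, Submodule.Quotient.mk_eq_zero]
    exact hx)
  refine ⟨m ∘ₗ N.mkQ.restrictScalars k₂, ?_, ?_⟩
  · intro I hI
    apply hlam₁
    intro x hx
    have h0 : N.mkQ x = 0 := by
      apply hm
      intro z
      rw [← map_smul, Algebra.smul_def]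
      exact hI (I.mul_mem_left _ hx)
    change lam₁ x = 0
    rw [← hl, h0, map_zero]
  · intro r s
    have : N.mkQ (r * s) = N.mkQ (s * σ r) := by
      rw [← sub_eq_zero, ← map_sub, Submodule.mkQ_apply, Submodule.Quotient.mk_eq_zero, hN]
      intro z
      rw [smul_sub, map_sub, ← mul_smul_comm, hσ, smul_mul_assoc, sub_self]
    change m (N.mkQ _) = m (N.mkQ _)
    rw [this]


/-- **Theorem: Nakayama automorphism independent of the ground field.**
Let `R` be a ring that is a finite-dimensional algebra over infinite fields `k₁` and `k₂`.
If `λ₁ : R → k₁` is a `k₁`-linear Frobenius functional (its kernel contains no nonzero left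
ideals) with Nakayama automorphism `σ`, then there is a `k₂`-linear Frobenius functional
`λ₂ : R → k₂` with the same Nakayama automorphism `σ`. -/
theorem nakayama_independent_of_infinite_fields
    {k₁ k₂ R : Type*} [Field k₁] [Field k₂] [Infinite k₁] [Infinite k₂] [Ring R]
    [Algebra k₁ R] [Algebra k₂ R]
    [FiniteDimensional k₁ R] [FiniteDimensional k₂ R]
    (lam₁ : R →ₗ[k₁] k₁)
    (hlam₁ : ∀ I : Ideal R, (I : Set R) ⊆ {x | lam₁ x = 0} → I = ⊥)
    (σ : R ≃+* R) (hσ : ∀ r s : R, lam₁ (r * s) = lam₁ (s * σ r)) :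
    ∃ lam₂ : R →ₗ[k₂] k₂,
      (∀ I : Ideal R, (I : Set R) ⊆ {x | lam₂ x = 0} → I = ⊥) ∧
      (∀ r s : R, lam₂ (r * s) = lam₂ (s * σ r)) := by
  let Z := Subring.center R
  letI : Algebra k₁ Z := ((algebraMap k₁ R).codRestrict Z
    (fun c => Subring.mem_center_iff.2 fun r => (Algebra.commutes c r).symm)).toAlgebra
  letI : Algebra k₂ Z := ((algebraMap k₂ R).codRestrict Z
    (fun c => Subring.mem_center_iff.2 fun r => (Algebra.commutes c r).symm)).toAlgebra
  letI : Algebra Z R := Z.subtype.toAlgebra' (fun c x => (Subring.mem_center_iff.1 c.2 x).symm)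
  haveI : IsScalarTower k₁ Z R := IsScalarTower.of_algebraMap_eq fun _ => rfl
  haveI : IsScalarTower k₂ Z R := IsScalarTower.of_algebraMap_eq fun _ => rfl
  haveI : FiniteDimensional k₁ Z :=
    FiniteDimensional.of_injective (IsScalarTower.toAlgHom k₁ Z R).toLinearMap
      Subtype.val_injective
  exact nak_center (Z := Z) lam₁ hlam₁ σ hσ
end

section
/- Let R be a ring that is a finite-dimensional algebra over a field k₁ and also a finite-dimensional algebra over a field k₂. For i = 1, 2 let Fᵢ be the functor from the category of left R-modules to the category of right R-modules sending a left R-module X to its kᵢ-dual Hom_{kᵢ}(X, kᵢ) with right R-action (f·r)(x) = f(r•x), and sending an R-linear map g : X → Y to the precomposition map f ↦ f ∘ g. Then F₁ and F₂ are naturally isomorphic functors if and only if Hom_{k₁}(R, k₁) and Hom_{k₂}(R, k₂) are isomorphic as (R,R)-bimodules, where the bimodule actions on Hom_{k}(R, k) are given by (r·f)(s) = f(s*r) and (f·r)(s) = f(r*s). -/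
universe u

/-- The right `R`-action on the `k`-dual of a left `R`-module `X`:
`(f · r) x = f (r • x)`. -/
def dualSMul (k R X : Type*) [Field k] [Ring R] [Algebra k R]
    [AddCommGroup X] [Module R X] [Module k X] [IsScalarTower k R X]
    (r : R) (f : X →ₗ[k] k) : X →ₗ[k] k where
  toFun x := f (r • x)
  map_add' x y := by show f (r • (x + y)) = f (r • x) + f (r • y); rw [smul_add, map_add]
  map_smul' c x := by
    show f (r • c • x) = c • f (r • x)
    rw [smul_comm r c x, map_smul, smul_eq_mul]

/-- The functional `s ↦ φ (s • x)` on `R`. -/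
def orbMap (k R : Type*) {X : Type*} [Field k] [Ring R] [Algebra k R]
    [AddCommGroup X] [Module R X] [Module k X] [IsScalarTower k R X]
    (φ : X →ₗ[k] k) (x : X) : R →ₗ[k] k where
  toFun s := φ (s • x)
  map_add' a b := by rw [add_smul, map_add]
  map_smul' c a := by rw [smul_assoc, map_smul]; rfl

section
variable {k₁ k₂ R X : Type*} [Field k₁] [Field k₂] [Ring R] [Algebra k₁ R] [Algebra k₂ R]
  [AddCommGroup X] [Module R X] [Module k₁ X] [Module k₂ X]
  [IsScalarTower k₁ R X] [IsScalarTower k₂ R X]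

theorem orbMap_smul (φ : X →ₗ[k₁] k₁) (r : R) (x : X) :
    orbMap k₁ R φ (r • x) = (orbMap k₁ R φ x).comp (LinearMap.mulRight k₁ r) := by
  ext s
  simp [orbMap, mul_smul]

theorem orbMap_add (φ : X →ₗ[k₁] k₁) (x y : X) :
    orbMap k₁ R φ (x + y) = orbMap k₁ R φ x + orbMap k₁ R φ y := by
  ext s
  simp [orbMap]

theorem orbMap_add_left (φ ψ : X →ₗ[k₁] k₁) (x : X) :
    orbMap k₁ R (φ + ψ) x = orbMap k₁ R φ x + orbMap k₁ R ψ x := by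
  ext s
  simp [orbMap]

/-- Transport of functionals along a left-linear map of duals. -/
def liftMap (X : Type*) [AddCommGroup X] [Module R X] [Module k₁ X] [Module k₂ X]
    [IsScalarTower k₁ R X] [IsScalarTower k₂ R X]
    (e : (R →ₗ[k₁] k₁) ≃+ (R →ₗ[k₂] k₂))
    (he : ∀ (f : R →ₗ[k₁] k₁) (r : R),
        e (f.comp (LinearMap.mulRight k₁ r)) = (e f).comp (LinearMap.mulRight k₂ r))
    (φ : X →ₗ[k₁] k₁) : X →ₗ[k₂] k₂ where
  toFun x := e (orbMap k₁ R φ x) 1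
  map_add' x y := by rw [orbMap_add, map_add]; rfl
  map_smul' c x := by
    rw [← algebraMap_smul R c x, orbMap_smul, he]
    simp [Algebra.algebraMap_eq_smul_one]

variable (e : (R →ₗ[k₁] k₁) ≃+ (R →ₗ[k₂] k₂))
    (he : ∀ (f : R →ₗ[k₁] k₁) (r : R),
        e (f.comp (LinearMap.mulRight k₁ r)) = (e f).comp (LinearMap.mulRight k₂ r))

theorem orbMap_liftMap (φ : X →ₗ[k₁] k₁) (x : X) :
    orbMap k₂ R (liftMap X e he φ) x = e (orbMap k₁ R φ x) := by
  ext s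
  show e (orbMap k₁ R φ (s • x)) 1 = _
  rw [orbMap_smul, he]
  simp

theorem liftMap_liftMap (he' : ∀ (f : R →ₗ[k₂] k₂) (r : R),
        e.symm (f.comp (LinearMap.mulRight k₂ r)) = (e.symm f).comp (LinearMap.mulRight k₁ r))
    (φ : X →ₗ[k₁] k₁) :
    liftMap X e.symm he' (liftMap X e he φ) = φ := by
  ext x
  show e.symm (orbMap k₂ R (liftMap X e he φ) x) 1 = _
  rw [orbMap_liftMap, e.symm_apply_apply]
  simp [orbMap]

end

/-- Let `R` be a ring that is a finite-dimensional algebra over fields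
`k₁` and `k₂`.  The `k₁`-dual functor and the `k₂`-dual functor from left `R`-modules to
right `R`-modules are naturally isomorphic iff `Hom_{k₁}(R,k₁) ≅ Hom_{k₂}(R,k₂)` as
`(R,R)`-bimodules.

A natural isomorphism is encoded as a family of additive bijections
`e X : Hom_{k₁}(X,k₁) ≃+ Hom_{k₂}(X,k₂)`, right `R`-equivariant
(`e X (f·r) = (e X f)·r`, where `(f·r) x = f (r • x)`), and natural in `X`
(for every `R`-linear `g : X → Y`, `e X (f ∘ g) = (e Y f) ∘ g`).

A bimodule isomorphism of the duals of `R` is an additive bijection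
`e : Hom_{k₁}(R,k₁) ≃+ Hom_{k₂}(R,k₂)` with `e (r·f) = r·(e f)` and `e (f·r) = (e f)·r`,
where `(r·f) s = f (s*r)` and `(f·r) s = f (r*s)`. -/
theorem dual_functors_naturally_isomorphic_iff_bimodule_iso
    {k₁ k₂ R : Type u} [Field k₁] [Field k₂] [Ring R]
    [Algebra k₁ R] [Algebra k₂ R]
    [FiniteDimensional k₁ R] [FiniteDimensional k₂ R] :
    (∃ e : ∀ (X : Type u) [AddCommGroup X] [Module R X] [Module k₁ X] [Module k₂ X]
        [IsScalarTower k₁ R X] [IsScalarTower k₂ R X], (X →ₗ[k₁] k₁) ≃+ (X →ₗ[k₂] k₂),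
      (∀ (X : Type u) [AddCommGroup X] [Module R X] [Module k₁ X] [Module k₂ X]
          [IsScalarTower k₁ R X] [IsScalarTower k₂ R X] (f : X →ₗ[k₁] k₁) (r : R),
        e X (dualSMul k₁ R X r f) = dualSMul k₂ R X r (e X f)) ∧
      (∀ (X Y : Type u) [AddCommGroup X] [Module R X] [Module k₁ X] [Module k₂ X]
          [IsScalarTower k₁ R X] [IsScalarTower k₂ R X]
          [AddCommGroup Y] [Module R Y] [Module k₁ Y] [Module k₂ Y]
          [IsScalarTower k₁ R Y] [IsScalarTower k₂ R Y]
          (g : X →ₗ[R] Y) (f : Y →ₗ[k₁] k₁),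
        e X (f.comp (g.restrictScalars k₁)) = (e Y f).comp (g.restrictScalars k₂))) ↔
    (∃ e : (R →ₗ[k₁] k₁) ≃+ (R →ₗ[k₂] k₂),
      (∀ (f : R →ₗ[k₁] k₁) (r : R),
        e (f.comp (LinearMap.mulRight k₁ r)) = (e f).comp (LinearMap.mulRight k₂ r)) ∧
      (∀ (f : R →ₗ[k₁] k₁) (r : R),
        e (f.comp (LinearMap.mulLeft k₁ r)) = (e f).comp (LinearMap.mulLeft k₂ r))) := by
  constructor
  · rintro ⟨e, h1, h2⟩
    refine ⟨e R, fun f r => ?_, fun f r => ?_⟩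
    · exact h2 R R (LinearMap.toSpanSingleton R R r) f
    · exact h1 R f r
  · rintro ⟨e, hr, hl⟩
    have hr' : ∀ (f : R →ₗ[k₂] k₂) (r : R),
        e.symm (f.comp (LinearMap.mulRight k₂ r)) =
          (e.symm f).comp (LinearMap.mulRight k₁ r) := by
      intro f r
      rw [e.symm_apply_eq, hr, e.apply_symm_apply]
    refine ⟨fun X _ _ _ _ _ _ =>
      { toFun := liftMap X e hr
        invFun := liftMap X e.symm hr'
        left_inv := liftMap_liftMap e hr hr'
        right_inv := liftMap_liftMap e.symm hr' hr
        map_add' := fun φ ψ => ?_ }, ?_, ?_⟩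
    · ext x
      show e (orbMap k₁ R (φ + ψ) x) 1 = _
      rw [orbMap_add_left, map_add]
      rfl
    · intro X _ _ _ _ _ _ f r
      ext x
      show e (orbMap k₁ R (dualSMul k₁ R X r f) x) 1 = e (orbMap k₁ R f (r • x)) 1
      have h : orbMap k₁ R (dualSMul k₁ R X r f) x =
          (orbMap k₁ R f x).comp (LinearMap.mulLeft k₁ r) := by
        ext s
        simp [orbMap, dualSMul, mul_smul]
      rw [h, hl, orbMap_smul, hr]
      simp
    · intro X Y _ _ _ _ _ _ _ _ _ _ _ _ g f
      ext x
      show e (orbMap k₁ R (f.comp (g.restrictScalars k₁)) x) 1 = e (orbMap k₁ R f (g x)) 1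
      congr 2
      ext s
      simp [orbMap]
end

section
/- Let R be a ring that is a finite-dimensional algebra over infinite fields k₁ and k₂, and suppose R is a Frobenius k₁-algebra, i.e., there exists a k₁-linear functional λ₁ : R → k₁ whose kernel contains no nonzero left ideals of R. Then for every left R-module X there exists an additive bijection e : Hom_{k₁}(X, k₁) → Hom_{k₂}(X, k₂) that is right R-equivariant: for all f ∈ Hom_{k₁}(X, k₁), r ∈ R, and x ∈ X, e(f · r)(x) = (e f)(r • x), where the right R-action on each dual is (f · r)(x) = f(r • x); that is, the k₁-dual and the k₂-dual of X are isomorphic as right R-modules. -/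
universe u v

/-- The `k`-dual of a commutative `k`-algebra `Z`, to be viewed as a `Z`-module. -/
def EDual (k Z : Type*) [Field k] [CommRing Z] [Algebra k Z] : Type _ := Z →ₗ[k] k

namespace EDual

instance (k Z : Type*) [Field k] [CommRing Z] [Algebra k Z] : AddCommGroup (EDual k Z) :=
  inferInstanceAs (AddCommGroup (Z →ₗ[k] k))

instance (k Z : Type*) [Field k] [CommRing Z] [Algebra k Z] : FunLike (EDual k Z) Z k :=
  inferInstanceAs (FunLike (Z →ₗ[k] k) Z k)

instance (k Z : Type*) [Field k] [CommRing Z] [Algebra k Z] :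
    LinearMapClass (EDual k Z) k Z k :=
  inferInstanceAs (LinearMapClass (Z →ₗ[k] k) k Z k)

section
variable {k Z : Type*} [Field k] [CommRing Z] [Algebra k Z]

/-- Constructor. -/
def mk (f : Z →ₗ[k] k) : EDual k Z := f

@[simp] theorem mk_apply (f : Z →ₗ[k] k) (z : Z) : mk f z = f z := rfl

@[simp] theorem add_app (f g : EDual k Z) (z : Z) : (f + g) z = f z + g z := rfl

@[simp] theorem zero_app (z : Z) : (0 : EDual k Z) z = 0 := rfl

@[ext] theorem ext' {f g : EDual k Z} (h : ∀ z, f z = g z) : f = g := DFunLike.ext _ _ h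

instance instSMulE {A : Type*} [CommRing A] [Algebra A Z] : SMul A (EDual k Z) where
  smul a f := mk
    { toFun := fun z => f (a • z)
      map_add' := fun x y => by rw [smul_add, map_add]
      map_smul' := fun c x => by
        have : a • c • x = c • a • x := by
          rw [Algebra.smul_def, Algebra.smul_def, Algebra.smul_def, Algebra.smul_def]; ring
        rw [this, map_smul]; rfl }

theorem smul_app {A : Type*} [CommRing A] [Algebra A Z] (a : A) (f : EDual k Z) (z : Z) :
    (a • f) z = f (a • z) := rfl

instance instModuleE {A : Type*} [CommRing A] [Algebra A Z] : Module A (EDual k Z) where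
  one_smul f := by ext z; rw [smul_app, one_smul]
  mul_smul a b f := by ext z; rw [smul_app, smul_app, smul_app, mul_comm, mul_smul]
  smul_zero a := by ext z; rfl
  smul_add a f g := by ext z; rfl
  add_smul a b f := by
    ext z; rw [smul_app, add_smul, map_add]; rfl
  zero_smul f := by ext z; rw [smul_app, zero_smul, map_zero]; rfl

instance instTowerE {A : Type*} [CommRing A] [Algebra A Z] : IsScalarTower A Z (EDual k Z) where
  smul_assoc a z f := by
    ext y; rw [smul_app, smul_app, smul_app]
    congr 1; simp only [Algebra.smul_def, smul_eq_mul]; simp; ring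

instance instFiniteE [FiniteDimensional k Z] : FiniteDimensional k (EDual k Z) := by
  let e : (Z →ₗ[k] k) ≃ₗ[k] EDual k Z :=
    { toFun := mk
      invFun := fun f => f
      map_add' := fun _ _ => rfl
      map_smul' := fun c f => by
        ext z
        show c • f z = f (c • z)
        rw [map_smul]
      left_inv := fun _ => rfl
      right_inv := fun _ => rfl }
  exact Module.Finite.equiv e

/-- The socle components of the dual are one-dimensional. -/
theorem soc [FiniteDimensional k Z] (m : Ideal Z) [hm : m.IsMaximal] (w v : EDual k Z)
    (hw : ∀ z ∈ m, w z = 0) (hv : ∀ z ∈ m, v z = 0) (hw0 : w ≠ 0) :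
    ∃ a : Z, v = a • w := by
  by_contra hcon
  let w' : Z →ₗ[k] k := w
  let W : Z →ₗ[k] Module.Dual k Z := (LinearMap.mul k Z).compr₂ w'
  have hW : ∀ a z, W a z = w (a * z) := fun a z => rfl
  let v' : Module.Dual k Z := v
  have hn : v' ∉ LinearMap.range W := by
    rintro ⟨a, ha⟩
    refine hcon ⟨a, ?_⟩
    ext z
    exact (LinearMap.congr_fun ha z).symm
  obtain ⟨F, hF, hle⟩ := Submodule.exists_le_ker_of_notMem hn
  obtain ⟨z0, rfl⟩ := (Module.evalEquiv k Z).surjective F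
  have hvz : v z0 ≠ 0 := hF
  have hz0 : z0 ∉ m := fun h => hvz (hv _ h)
  have hwz : ∀ a, w (a * z0) = 0 := fun a => hle ⟨a, rfl⟩
  obtain ⟨b, hb⟩ := hm.exists_inv hz0
  obtain ⟨i, hi, hbi⟩ := hb
  apply hw0
  ext y
  have : y = (y * b) * z0 + y * i := by linear_combination (-y) * hbi
  rw [this, map_add, hwz, hw _ (m.mul_mem_left _ hi)]
  simp

end

/-- Existence of an injective `Z`-linear map between the duals. -/
theorem exists_inj {k k' Z : Type*} [Field k] [Field k'] [Infinite k'] [CommRing Z]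
    [Algebra k Z] [Algebra k' Z] [FiniteDimensional k Z] :
    ∃ φ : EDual k Z →ₗ[Z] EDual k' Z, Function.Injective φ := by
  have hart : IsArtinianRing Z := isArtinian_of_tower k inferInstance
  have hex : ∀ m : MaximalSpectrum Z, ∃ v : EDual k Z, (∀ z ∈ m.asIdeal, v z = 0) ∧ v ≠ 0 := by
    intro m
    have h1 : (1 : Z) ∉ m.asIdeal.restrictScalars k := fun h =>
      m.isMaximal.ne_top ((Ideal.eq_top_iff_one _).2 h)
    obtain ⟨f, hf, hle⟩ := Submodule.exists_le_ker_of_notMem h1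
    refine ⟨mk f, fun z hz => hle hz, fun h => hf ?_⟩
    rw [← mk_apply, h]; rfl
  choose v hv hv0 using hex
  obtain ⟨l, hl⟩ := Module.exists_dual_forall_apply_ne_zero (K := k') v hv0
  let φ : EDual k Z →ₗ[Z] EDual k' Z :=
    { toFun := fun w => mk
        { toFun := fun z => l (z • w)
          map_add' := fun x y => by rw [add_smul, map_add]
          map_smul' := fun c x => by rw [smul_assoc, map_smul]; rfl }
      map_add' := fun x y => by
        ext z
        show l (z • (x + y)) = l (z • x) + l (z • y)
        rw [smul_add, map_add]
      map_smul' := fun c x => by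
        ext z
        show l (z • c • x) = l ((c • z) • x)
        rw [smul_smul, smul_eq_mul, mul_comm] }
  refine ⟨φ, ?_⟩
  rw [← LinearMap.ker_eq_bot]
  by_contra hne
  have : Nontrivial (LinearMap.ker φ) := Submodule.nontrivial_iff_ne_bot.2 hne
  obtain ⟨p, hp⟩ := associatedPrimes.nonempty Z (LinearMap.ker φ)
  obtain ⟨hpp, w, hw⟩ := isAssociatedPrime_iff.1 hp
  have hmax : p.IsMaximal := inferInstance
  have hmem : ∀ z, z ∈ p ↔ z • w = 0 := by
    intro z; rw [hw, Submodule.mem_colon_singleton]; simp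
  have hw0 : (w : EDual k Z) ≠ 0 := by
    intro h
    apply hpp.ne_top
    rw [Ideal.eq_top_iff_one, hmem, one_smul]
    exact Subtype.ext h
  have hwz : ∀ z ∈ p, (w : EDual k Z) z = 0 := by
    intro z hz
    have h1 : z • (w : EDual k Z) = 0 := congrArg Subtype.val ((hmem z).1 hz)
    have h2 : (z • (w : EDual k Z)) 1 = 0 := by rw [h1]; rfl
    rw [smul_app, smul_eq_mul, mul_one] at h2
    exact h2
  obtain ⟨a, ha⟩ := soc p (w : EDual k Z) (v ⟨p, hmax⟩) hwz (hv ⟨p, hmax⟩) hw0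
  apply hl ⟨p, hmax⟩
  rw [ha]
  have h3 : φ (w : EDual k Z) = 0 := w.2
  have h4 : φ (w : EDual k Z) a = 0 := by rw [h3]; rfl
  exact h4

/-- The two duals of `Z` are isomorphic `Z`-modules. -/
theorem exists_equiv {k k' Z : Type*} [Field k] [Field k'] [Infinite k] [Infinite k'] [CommRing Z]
    [Algebra k Z] [Algebra k' Z] [FiniteDimensional k Z] [FiniteDimensional k' Z] :
    Nonempty (EDual k Z ≃ₗ[Z] EDual k' Z) := by
  obtain ⟨φ, hφ⟩ := exists_inj (k := k) (k' := k') (Z := Z)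
  obtain ⟨ψ, hψ⟩ := exists_inj (k := k') (k' := k) (Z := Z)
  have hart : IsArtinian Z (EDual k' Z) := isArtinian_of_tower k' inferInstance
  have hb := IsArtinian.bijective_of_injective_endomorphism (φ ∘ₗ ψ) (hφ.comp hψ)
  refine ⟨LinearEquiv.ofBijective φ ⟨hφ, fun y => ?_⟩⟩
  obtain ⟨x, hx⟩ := hb.2 y
  exact ⟨ψ x, hx⟩

section
variable {k k' Z X : Type*} [Field k] [Field k'] [CommRing Z]
    [Algebra k Z] [Algebra k' Z] [AddCommGroup X] [Module Z X] [Module k X] [Module k' X]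
    [IsScalarTower k Z X] [IsScalarTower k' Z X]

/-- The element of the dual of `Z` attached to a functional and a vector. -/
def coef (f : X →ₗ[k] k) (x : X) : EDual k Z := mk
  { toFun := fun z => f (z • x)
    map_add' := fun y z => by rw [add_smul, map_add]
    map_smul' := fun c z => by rw [smul_assoc, map_smul]; rfl }

theorem coef_app (f : X →ₗ[k] k) (x : X) (z : Z) : coef f x z = f (z • x) := rfl

theorem coef_add (f : X →ₗ[k] k) (x y : X) :
    (coef f (x + y) : EDual k Z) = coef f x + coef f y := by
  ext z; rw [add_app, coef_app, coef_app, coef_app, smul_add, map_add]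

theorem coef_smul (f : X →ₗ[k] k) (a : Z) (x : X) :
    (coef f (a • x) : EDual k Z) = a • coef f x := by
  ext z; rw [smul_app, coef_app, coef_app, smul_smul, smul_eq_mul, mul_comm]

/-- Transport of functionals. -/
def trans (φ : EDual k Z →ₗ[Z] EDual k' Z) (f : X →ₗ[k] k) : X →ₗ[k'] k' where
  toFun x := φ (coef f x) 1
  map_add' x y := by rw [coef_add, map_add, add_app]
  map_smul' c x := by
    have h : c • x = (c • (1 : Z)) • x := by rw [smul_assoc, one_smul]
    rw [h, coef_smul, map_smul, smul_app, smul_eq_mul, mul_one, map_smul]; rfl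

theorem trans_app (φ : EDual k Z →ₗ[Z] EDual k' Z) (f : X →ₗ[k] k) (x : X) :
    trans φ f x = φ (coef f x) 1 := rfl

theorem coef_trans (φ : EDual k Z →ₗ[Z] EDual k' Z) (f : X →ₗ[k] k) (x : X) :
    coef (trans φ f) x = φ (coef f x) := by
  ext z
  rw [coef_app, trans_app, coef_smul, map_smul, smul_app, smul_eq_mul, mul_one]

theorem trans_trans (φ : EDual k Z →ₗ[Z] EDual k' Z) (ψ : EDual k' Z →ₗ[Z] EDual k Z)
    (h : ∀ x, ψ (φ x) = x) (f : X →ₗ[k] k) : trans ψ (trans φ f) = f := by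
  ext x
  rw [trans_app, coef_trans, h, coef_app, one_smul]

/-- The additive equivalence between the duals. -/
def transEquiv (φ : EDual k Z ≃ₗ[Z] EDual k' Z) : (X →ₗ[k] k) ≃+ (X →ₗ[k'] k') where
  toFun := trans φ.toLinearMap
  invFun := trans φ.symm.toLinearMap
  left_inv f := trans_trans _ _ (fun x => φ.symm_apply_apply x) f
  right_inv f := trans_trans _ _ (fun x => φ.apply_symm_apply x) f
  map_add' f g := by
    ext x
    have : (coef (f + g) x : EDual k Z) = coef f x + coef g x := by ext z; rfl
    rw [LinearMap.add_apply, trans_app, trans_app, trans_app, this, map_add, add_app]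

end

/-- The algebra structure on the center. -/
abbrev centerAlg (k R : Type*) [Field k] [Ring R] [Algebra k R] :
    Algebra k (Subring.center R) :=
  ((algebraMap k R).codRestrict (Subring.center R) (fun c =>
    Subring.mem_center_iff.2 fun r => (Algebra.commutes c r).symm)).toAlgebra

end EDual

/-- **Corollary: the dual functor is independent of the field.**
Let `R` be a ring that is a finite-dimensional algebra over infinite fields `k₁` and `k₂`,
and suppose `R` is a Frobenius `k₁`-algebra.  Then for every left `R`-module `X` there is
an additive bijection `e : Hom_{k₁}(X,k₁) ≃+ Hom_{k₂}(X,k₂)` that is right `R`-equivariant: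
`e (f · r) x = (e f) (r • x)`, where `(f · r) x = f (r • x)`; i.e. the `k₁`-dual and the
`k₂`-dual of `X` are isomorphic as right `R`-modules. -/
theorem k_dual_independent_of_field
    {k₁ k₂ R : Type u} [Field k₁] [Field k₂] [Infinite k₁] [Infinite k₂] [Ring R]
    [Algebra k₁ R] [Algebra k₂ R]
    [FiniteDimensional k₁ R] [FiniteDimensional k₂ R]
    (hFrob : ∃ lam₁ : R →ₗ[k₁] k₁,
      ∀ I : Ideal R, (I : Set R) ⊆ {x | lam₁ x = 0} → I = ⊥)
    (X : Type v) [AddCommGroup X] [Module R X] [Module k₁ X] [Module k₂ X]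
    [IsScalarTower k₁ R X] [IsScalarTower k₂ R X] :
    ∃ e : (X →ₗ[k₁] k₁) ≃+ (X →ₗ[k₂] k₂),
      ∀ (f : X →ₗ[k₁] k₁) (r : R) (x : X),
        e (dualSMul k₁ R X r f) x = e f (r • x) := by
  letI a1 : Algebra k₁ (Subring.center R) := EDual.centerAlg k₁ R
  letI a2 : Algebra k₂ (Subring.center R) := EDual.centerAlg k₂ R
  have s1 : ∀ (c : k₁) (z : Subring.center R), ((c • z : Subring.center R) : R) = c • (z : R) :=
    fun c z => by rw [Algebra.smul_def, Algebra.smul_def]; rfl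
  have s2 : ∀ (c : k₂) (z : Subring.center R), ((c • z : Subring.center R) : R) = c • (z : R) :=
    fun c z => by rw [Algebra.smul_def, Algebra.smul_def]; rfl
  haveI t1 : IsScalarTower k₁ (Subring.center R) X := ⟨fun c z x => by
    rw [Subring.smul_def, Subring.smul_def, s1, smul_assoc]⟩
  haveI t2 : IsScalarTower k₂ (Subring.center R) X := ⟨fun c z x => by
    rw [Subring.smul_def, Subring.smul_def, s2, smul_assoc]⟩
  haveI f1 : FiniteDimensional k₁ (Subring.center R) :=
    Module.Finite.of_injective
      ({ toFun := fun z => (z : R), map_add' := fun _ _ => rfl, map_smul' := s1 } :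
        Subring.center R →ₗ[k₁] R) Subtype.val_injective
  haveI f2 : FiniteDimensional k₂ (Subring.center R) :=
    Module.Finite.of_injective
      ({ toFun := fun z => (z : R), map_add' := fun _ _ => rfl, map_smul' := s2 } :
        Subring.center R →ₗ[k₂] R) Subtype.val_injective
  obtain ⟨φ⟩ := EDual.exists_equiv (k := k₁) (k' := k₂) (Z := Subring.center R)
  refine ⟨EDual.transEquiv φ, fun f r x => ?_⟩
  have h : (EDual.coef (dualSMul k₁ R X r f) x : EDual k₁ (Subring.center R)) =
      EDual.coef f (r • x) := by
    ext z
    show f (r • (z : R) • x) = f ((z : R) • r • x)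
    rw [smul_smul, smul_smul, Subring.mem_center_iff.1 z.2 r]
  show φ (EDual.coef (dualSMul k₁ R X r f) x) 1 = φ (EDual.coef f (r • x)) 1
  rw [h]
end

section
/- Let R be a ring that is a finite-dimensional algebra over infinite fields k₁ and k₂, and suppose R is a Frobenius k₁-algebra, i.e., there exists a k₁-linear functional λ₁ : R → k₁ whose kernel contains no nonzero left ideals of R. Then there exists an additive bijection e : Hom_{k₁}(R, k₁) → Hom_{k₂}(R, k₂) that is an (R,R)-bimodule isomorphism: for all f ∈ Hom_{k₁}(R, k₁), r, s ∈ R, e(r·f)(s) = (r·(e f))(s) and e(f·r)(s) = ((e f)·r)(s), where (r·f)(s) = f(s*r) and (f·r)(s) = f(r*s). -/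
/-- The `k`-dual of `C`. -/
def Dl (k C : Type*) [Field k] [CommRing C] [Algebra k C] := C →ₗ[k] k

section
variable {k C : Type*} [Field k] [CommRing C] [Algebra k C]

instance : AddCommGroup (Dl k C) := inferInstanceAs (AddCommGroup (C →ₗ[k] k))
instance : Module k (Dl k C) := inferInstanceAs (Module k (C →ₗ[k] k))

/-- underlying function -/
def Dl.ev (f : Dl k C) : C →ₗ[k] k := f

instance : Module C (Dl k C) where
  smul c f := (Dl.ev f).comp (LinearMap.mulLeft k c)
  one_smul f := LinearMap.ext fun d => congrArg (Dl.ev f) (one_mul d)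
  mul_smul a b f := LinearMap.ext fun d => congrArg (Dl.ev f)
    (show (a * b) * d = b * (a * d) by ring)
  smul_zero a := rfl
  smul_add a f g := rfl
  add_smul a b f := LinearMap.ext fun d =>
    (congrArg (Dl.ev f) (add_mul a b d)).trans (map_add (Dl.ev f) _ _)
  zero_smul f := LinearMap.ext fun d =>
    (congrArg (Dl.ev f) (zero_mul d)).trans (map_zero (Dl.ev f))

theorem Dl.smul_ev (c d : C) (f : Dl k C) : (c • f).ev d = f.ev (c * d) := rfl
theorem Dl.add_ev (f g : Dl k C) (d : C) : (f + g).ev d = f.ev d + g.ev d := rfl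
theorem Dl.zero_ev (d : C) : (0 : Dl k C).ev d = 0 := rfl
theorem Dl.ksmul_ev (c : k) (d : C) (f : Dl k C) : (c • f).ev d = c * f.ev d := rfl
theorem Dl.ext {f g : Dl k C} (h : ∀ d, f.ev d = g.ev d) : f = g := LinearMap.ext h

instance : IsScalarTower k C (Dl k C) where
  smul_assoc a c f := Dl.ext fun d => by
    rw [Dl.smul_ev, Dl.ksmul_ev, Dl.smul_ev, smul_mul_assoc, map_smul, smul_eq_mul]

instance [FiniteDimensional k C] : FiniteDimensional k (Dl k C) :=
  inferInstanceAs (FiniteDimensional k (C →ₗ[k] k))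

theorem Dl.exists_nonzero (m : Ideal C) (hm : m ≠ ⊤) :
    ∃ v : Dl k C, v ≠ 0 ∧ ∀ x ∈ m, v.ev x = 0 := by
  have h1 : (1 : C) ∉ m.restrictScalars k := fun h => hm ((Ideal.eq_top_iff_one m).2 h)
  obtain ⟨f, hf, hf'⟩ := Submodule.exists_dual_map_eq_bot_of_notMem h1 inferInstance
  refine ⟨f, ?_, fun x hx => ?_⟩
  · rintro rfl
    exact hf rfl
  · have : f x ∈ (m.restrictScalars k).map f := ⟨x, hx, rfl⟩
    rw [hf'] at this
    exact this

theorem Dl.mem_of_max [FiniteDimensional k C] (m : Ideal C) (g v : Dl k C)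
    (hg : ∀ x, x • g = 0 ↔ x ∈ m) (hv : ∀ x ∈ m, v.ev x = 0) : ∃ c : C, c • g = v := by
  let φ : C →ₗ[k] Module.Dual k C := (LinearMap.toSpanSingleton C (Dl k C) g).restrictScalars k
  have hk : LinearMap.ker φ = m.restrictScalars k := by
    ext x
    exact hg x
  have hle : LinearMap.range φ ≤
      (m.restrictScalars k).dualAnnihilator := by
    rintro _ ⟨c, rfl⟩
    refine (Submodule.mem_dualAnnihilator _).2 fun w hw => ?_
    have := (hg w).2 hw
    show g.ev (c * w) = 0
    rw [mul_comm, ← Dl.smul_ev, this, Dl.zero_ev]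
  have hr := LinearMap.finrank_range_add_finrank_ker φ
  have hd := Subspace.finrank_add_finrank_dualAnnihilator_eq (m.restrictScalars k)
  rw [hk] at hr
  have heq := Submodule.eq_of_le_of_finrank_eq hle (by
    have : ∀ a b c d : ℕ, a + b = c → b + d = c → a = d := by omega
    exact this _ _ _ _ hr hd)
  have hmem : (v.ev : Module.Dual k C) ∈ (m.restrictScalars k).dualAnnihilator :=
    (Submodule.mem_dualAnnihilator _).2 hv
  rw [← heq] at hmem
  exact hmem

theorem Dl.exists_family [FiniteDimensional k C] :
    ∃ v : MaximalSpectrum C → Dl k C, (∀ i, v i ≠ 0) ∧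
      ∀ f : Dl k C, f ≠ 0 → ∃ (c : C) (i : MaximalSpectrum C), c • f = v i := by
  have : IsArtinianRing C := IsArtinianRing.of_finite k C
  choose v hv hv' using fun i : MaximalSpectrum C =>
    Dl.exists_nonzero (k := k) i.asIdeal i.isMaximal.ne_top
  refine ⟨v, hv, fun f hf => ?_⟩
  let x : Submodule.span C {f} := ⟨f, Submodule.mem_span_singleton_self f⟩
  have hx : x ≠ 0 := fun h => hf (congrArg Subtype.val h)
  obtain ⟨P, hP, -⟩ := exists_le_isAssociatedPrime_of_isNoetherianRing C x hx
  have hPp := hP.isPrime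
  have hPm : P.IsMaximal := inferInstance
  obtain ⟨y, hy⟩ := ((isAssociatedPrime_iff).1 hP).2
  obtain ⟨c, hc⟩ := Submodule.mem_span_singleton.1 y.2
  obtain ⟨d, hd⟩ := Dl.mem_of_max P (c • f) (v ⟨P, hPm⟩) (fun z => by
    rw [hy, hc, Submodule.mem_colon_singleton, Submodule.mem_bot, Subtype.ext_iff]
    rfl) (hv' ⟨P, hPm⟩)
  exact ⟨d * c, _, by rw [mul_smul, hd]⟩

end

theorem Dl.exists_inj (k₁ k₂ C : Type*) [Field k₁] [Field k₂] [Infinite k₂] [CommRing C]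
    [Algebra k₁ C] [Algebra k₂ C] [FiniteDimensional k₁ C] :
    ∃ θ : Dl k₁ C →ₗ[C] Dl k₂ C, Function.Injective θ := by
  have : IsArtinianRing C := IsArtinianRing.of_finite k₁ C
  obtain ⟨v, hv, hv'⟩ := Dl.exists_family (k := k₁) (C := C)
  letI : Module k₂ (Dl k₁ C) := Module.compHom _ (algebraMap k₂ C)
  have hsm : ∀ (a : k₂) (f : Dl k₁ C), a • f = algebraMap k₂ C a • f := fun _ _ => rfl
  obtain ⟨μ, hμ⟩ := Module.exists_dual_forall_apply_ne_zero (K := k₂) v hv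
  refine ⟨{ toFun := fun f => ({ toFun := fun c => μ (c • f)
                                 map_add' := fun a b => by rw [add_smul, map_add]
                                 map_smul' := fun a b => by
                                  rw [← map_smul, hsm, ← mul_smul, Algebra.smul_def]
                                  rfl } : C →ₗ[k₂] k₂)
            map_add' := fun f g => LinearMap.ext fun c =>
              (congrArg μ (smul_add c f g)).trans (map_add μ _ _)
            map_smul' := fun a f => LinearMap.ext fun c => congrArg μ (by
              show c • a • f = (a * c) • f
              rw [← mul_smul, mul_comm]) }, ?_⟩
  rw [← LinearMap.ker_eq_bot, LinearMap.ker_eq_bot']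
  intro f hf
  by_contra hne
  obtain ⟨c, i, hc⟩ := hv' f hne
  apply hμ i
  rw [← hc]
  exact LinearMap.congr_fun hf c

theorem Dl.exists_equiv (k₁ k₂ C : Type*) [Field k₁] [Field k₂] [Infinite k₁] [Infinite k₂]
    [CommRing C] [Algebra k₁ C] [Algebra k₂ C] [FiniteDimensional k₁ C]
    [FiniteDimensional k₂ C] : Nonempty (Dl k₁ C ≃ₗ[C] Dl k₂ C) := by
  obtain ⟨θ, hθ⟩ := Dl.exists_inj k₁ k₂ C
  obtain ⟨ψ, hψ⟩ := Dl.exists_inj k₂ k₁ C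
  have : IsArtinian C (Dl k₂ C) := isArtinian_of_tower k₂ inferInstance
  have hs := IsArtinian.surjective_of_injective_endomorphism (θ ∘ₗ ψ) (hθ.comp hψ)
  exact ⟨LinearEquiv.ofBijective θ ⟨hθ, Function.Surjective.of_comp hs⟩⟩

section
variable {k k' C R : Type*} [Field k] [Field k'] [CommRing C] [Ring R] [Algebra k C]
  [Algebra k' C] [Algebra k R] [Algebra k' R] [Algebra C R] [IsScalarTower k C R]
  [IsScalarTower k' C R]

/-- `c ↦ f (c r)` -/
def Dl.res (f : R →ₗ[k] k) (r : R) : Dl k C :=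
  f.comp ((LinearMap.toSpanSingleton C R r).restrictScalars k)

theorem Dl.res_ev (f : R →ₗ[k] k) (r : R) (c : C) : (Dl.res f r).ev c = f (c • r) := rfl

theorem Dl.res_smul (f : R →ₗ[k] k) (r : R) (c : C) :
    Dl.res f (c • r) = c • (Dl.res f r : Dl k C) := Dl.ext fun d => by
  rw [Dl.smul_ev, Dl.res_ev, Dl.res_ev, ← mul_smul, mul_comm]

theorem Dl.res_add (f : R →ₗ[k] k) (r s : R) :
    Dl.res f (r + s) = (Dl.res f r + Dl.res f s : Dl k C) := Dl.ext fun d => by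
  rw [Dl.add_ev, Dl.res_ev, Dl.res_ev, Dl.res_ev, smul_add, map_add]

theorem Dl.res_add' (f g : R →ₗ[k] k) (r : R) :
    Dl.res (f + g) r = (Dl.res f r + Dl.res g r : Dl k C) := rfl

/-- The induced map. -/
def Dl.tr (θ : Dl k C ≃ₗ[C] Dl k' C) (f : R →ₗ[k] k) : R →ₗ[k'] k' where
  toFun r := (θ (Dl.res f r)).ev 1
  map_add' r s := by rw [Dl.res_add, map_add, Dl.add_ev]
  map_smul' a r := by
    rw [← algebraMap_smul C a r, Dl.res_smul, map_smul, Dl.smul_ev, ← Algebra.smul_def,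
      map_smul]
    rfl

theorem Dl.tr_apply (θ : Dl k C ≃ₗ[C] Dl k' C) (f : R →ₗ[k] k) (r : R) :
    Dl.tr θ f r = (θ (Dl.res f r)).ev 1 := rfl

theorem Dl.tr_tr (θ : Dl k C ≃ₗ[C] Dl k' C) (f : R →ₗ[k] k) :
    Dl.tr θ.symm (Dl.tr θ f) = f := by
  ext r
  have : Dl.res (Dl.tr θ f) r = θ (Dl.res f r) := Dl.ext fun c => by
    rw [Dl.res_ev, Dl.tr_apply, Dl.res_smul, map_smul, Dl.smul_ev, mul_one]
  rw [Dl.tr_apply, this, LinearEquiv.symm_apply_apply, Dl.res_ev, one_smul]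

theorem Dl.main (θ : Dl k C ≃ₗ[C] Dl k' C) :
    ∃ e : (R →ₗ[k] k) ≃+ (R →ₗ[k'] k'),
      (∀ (f : R →ₗ[k] k) (r s : R),
        e (f.comp (LinearMap.mulRight k r)) s = e f (s * r)) ∧
      (∀ (f : R →ₗ[k] k) (r s : R),
        e (f.comp (LinearMap.mulLeft k r)) s = e f (r * s)) := by
  refine ⟨{ toFun := Dl.tr θ
            invFun := Dl.tr θ.symm
            left_inv := Dl.tr_tr θ
            right_inv := fun g => Dl.tr_tr θ.symm g
            map_add' := fun f g => ?_ }, fun f r s => ?_, fun f r s => ?_⟩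
  · ext r
    rw [LinearMap.add_apply, Dl.tr_apply, Dl.res_add', map_add, Dl.add_ev]
    rfl
  · show Dl.tr θ _ s = Dl.tr θ f _
    rw [Dl.tr_apply, Dl.tr_apply]
    congr 3
    refine Dl.ext fun c => ?_
    rw [Dl.res_ev, Dl.res_ev, ← smul_mul_assoc]
    rfl
  · show Dl.tr θ _ s = Dl.tr θ f _
    rw [Dl.tr_apply, Dl.tr_apply]
    congr 3
    refine Dl.ext fun c => ?_
    rw [Dl.res_ev, Dl.res_ev, ← mul_smul_comm]
    rfl
end

/-- **Corollary: the bimodule type of the dual of `R` is independent of the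
field.**  Let `R` be a ring that is a finite-dimensional algebra over infinite fields `k₁`
and `k₂`, and suppose `R` is a Frobenius `k₁`-algebra.  Then there is an additive bijection
`e : Hom_{k₁}(R,k₁) ≃+ Hom_{k₂}(R,k₂)` that is an `(R,R)`-bimodule isomorphism:
`e (r·f) = r·(e f)` and `e (f·r) = (e f)·r`, where `(r·f) s = f (s*r)` and
`(f·r) s = f (r*s)`. -/
theorem bimodule_dual_independent_of_field
    {k₁ k₂ R : Type*} [Field k₁] [Field k₂] [Infinite k₁] [Infinite k₂] [Ring R]
    [Algebra k₁ R] [Algebra k₂ R]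
    [FiniteDimensional k₁ R] [FiniteDimensional k₂ R]
    (hFrob : ∃ lam₁ : R →ₗ[k₁] k₁,
      ∀ I : Ideal R, (I : Set R) ⊆ {x | lam₁ x = 0} → I = ⊥) :
    ∃ e : (R →ₗ[k₁] k₁) ≃+ (R →ₗ[k₂] k₂),
      (∀ (f : R →ₗ[k₁] k₁) (r s : R),
        e (f.comp (LinearMap.mulRight k₁ r)) s = e f (s * r)) ∧
      (∀ (f : R →ₗ[k₁] k₁) (r s : R),
        e (f.comp (LinearMap.mulLeft k₁ r)) s = e f (r * s)) := by
  let a₁ : Algebra k₁ (Subring.center R) := RingHom.toAlgebra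
    ((algebraMap k₁ R).codRestrict (Subring.center R)
      fun x => Subring.mem_center_iff.2 fun g => (Algebra.commutes x g).symm)
  let a₂ : Algebra k₂ (Subring.center R) := RingHom.toAlgebra
    ((algebraMap k₂ R).codRestrict (Subring.center R)
      fun x => Subring.mem_center_iff.2 fun g => (Algebra.commutes x g).symm)
  let aC : Algebra (Subring.center R) R := Algebra.ofModule
    (fun r x y => mul_assoc (r : R) x y)
    (fun r x y => by
      show x * ((r : R) * y) = (r : R) * (x * y)
      rw [← mul_assoc, Subring.mem_center_iff.1 r.2 x, mul_assoc])
  have t₁ : IsScalarTower k₁ (Subring.center R) R := ⟨fun a c x => by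
    show (algebraMap k₁ R a * (c : R)) * x = a • ((c : R) * x)
    rw [mul_assoc, Algebra.smul_def]⟩
  have t₂ : IsScalarTower k₂ (Subring.center R) R := ⟨fun a c x => by
    show (algebraMap k₂ R a * (c : R)) * x = a • ((c : R) * x)
    rw [mul_assoc, Algebra.smul_def]⟩
  have f₁ : FiniteDimensional k₁ (Subring.center R) := FiniteDimensional.of_injective
    ((LinearMap.toSpanSingleton (Subring.center R) R 1).restrictScalars k₁)
    (fun a b h => Subtype.ext (by
      have h' : (a : R) * 1 = (b : R) * 1 := h
      simpa using h'))
  have f₂ : FiniteDimensional k₂ (Subring.center R) := FiniteDimensional.of_injective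
    ((LinearMap.toSpanSingleton (Subring.center R) R 1).restrictScalars k₂)
    (fun a b h => Subtype.ext (by
      have h' : (a : R) * 1 = (b : R) * 1 := h
      simpa using h'))
  obtain ⟨θ⟩ := Dl.exists_equiv k₁ k₂ (Subring.center R)
  exact Dl.main θ
end

section
/- Let R be a ring that is a finite-dimensional algebra over infinite fields k₁ and k₂. If R is a symmetric k₁-algebra, i.e., there exists a k₁-linear functional λ₁ : R → k₁ with λ₁(r*s) = λ₁(s*r) for all r, s ∈ R and whose kernel contains no nonzero left ideals of R, then R is a symmetric k₂-algebra, i.e., there exists a k₂-linear functional λ₂ : R → k₂ with λ₂(r*s) = λ₂(s*r) for all r, s ∈ R and whose kernel contains no nonzero left ideals of R. -/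
theorem aux_inj {k Z M : Type*} [Field k] [CommRing Z] [Algebra k Z] [FiniteDimensional k Z]
    [AddCommGroup M] [Module k M] [Module Z M] [IsScalarTower k Z M]
    (lam : M →ₗ[k] k) (h : ∀ N : Submodule Z M, (∀ x ∈ N, lam x = 0) → N = ⊥)
    (m : Ideal Z) (φ ψ : (Z ⧸ m) →ₗ[Z] M) (hφ : Function.Injective φ) :
    LinearMap.range ψ ≤ LinearMap.range φ := by
  let f : (Z ⧸ m) →ₗ[k] k := lam ∘ₗ φ.restrictScalars k
  let g : (Z ⧸ m) →ₗ[k] k := lam ∘ₗ ψ.restrictScalars k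
  let θ : (Z ⧸ m) →ₗ[k] Module.Dual k (Z ⧸ m) := (LinearMap.mul k (Z ⧸ m)).compr₂ f
  have hθ : Function.Injective θ := by
    rw [injective_iff_map_eq_zero]
    intro a ha
    have h1 := h (LinearMap.range (φ ∘ₗ LinearMap.mulLeft Z a)) (by
      rintro _ ⟨b, rfl⟩
      exact LinearMap.congr_fun ha b)
    rw [LinearMap.range_eq_bot] at h1
    have h2 := LinearMap.congr_fun h1 1
    simp only [LinearMap.comp_apply, LinearMap.mulLeft_apply, mul_one, LinearMap.zero_apply] at h2
    exact hφ (by simpa using h2)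
  have hfd : FiniteDimensional k (Z ⧸ m) := inferInstance
  have hs : Function.Surjective θ :=
    (LinearMap.injective_iff_surjective_of_finrank_eq_finrank
      (Subspace.dual_finrank_eq).symm).1 hθ
  obtain ⟨a, ha⟩ := hs g
  have h1 := h (LinearMap.range (ψ - φ ∘ₗ LinearMap.mulLeft Z a)) (by
    rintro _ ⟨b, rfl⟩
    have := LinearMap.congr_fun ha b
    rw [LinearMap.sub_apply, map_sub, sub_eq_zero]
    exact this.symm)
  rw [LinearMap.range_eq_bot, sub_eq_zero] at h1
  rw [h1]
  exact LinearMap.range_comp_le_range _ _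

theorem aux_mod {k₁ k₂ Z M : Type*} [Field k₁] [Field k₂] [Infinite k₂] [CommRing Z]
    [Algebra k₁ Z] [FiniteDimensional k₁ Z]
    [AddCommGroup M] [Module k₁ M] [Module k₂ M] [Module Z M] [IsScalarTower k₁ Z M]
    [Module.Finite k₁ M]
    (lam : M →ₗ[k₁] k₁) (h : ∀ N : Submodule Z M, (∀ x ∈ N, lam x = 0) → N = ⊥) :
    ∃ mu : M →ₗ[k₂] k₂, ∀ N : Submodule Z M, (∀ x ∈ N, mu x = 0) → N = ⊥ := by
  have : Module.Finite Z M := Module.Finite.of_restrictScalars_finite k₁ Z M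
  have : IsArtinianRing Z := IsArtinianRing.of_finite k₁ Z
  have key : ∀ S : {S : Submodule Z M // IsAtom S}, ∃ m : MaximalSpectrum Z,
      ∃ φ : (Z ⧸ m.asIdeal) →ₗ[Z] M, Function.Injective φ ∧ LinearMap.range φ = S.1 := by
    rintro ⟨S, hS⟩
    have : IsSimpleModule Z S := isSimpleModule_iff_isAtom.2 hS
    obtain ⟨m, hm, ⟨e⟩⟩ := isSimpleModule_iff_quot_maximal.1 this
    refine ⟨⟨m, hm⟩, S.subtype ∘ₗ e.symm.toLinearMap,
      S.injective_subtype.comp e.symm.injective, ?_⟩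
    rw [LinearMap.range_comp, LinearEquiv.range, Submodule.map_top, Submodule.range_subtype]
  choose m φ hφ hr using key
  have hinj : Function.Injective m := by
    intro S T hST
    have aux : ∀ S T : {S : Submodule Z M // IsAtom S}, m S = m T → T.1 ≤ S.1 := by
      intro S T hST
      have hT := hr T
      have : ∃ ψ : (Z ⧸ (m S).asIdeal) →ₗ[Z] M, LinearMap.range ψ = T.1 := by
        rw [hST]; exact ⟨_, hT⟩
      obtain ⟨ψ, hψ⟩ := this
      rw [← hψ, ← hr S]
      exact aux_inj lam h _ _ _ (hφ S)
    exact Subtype.ext (le_antisymm (aux T S hST.symm) (aux S T hST))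
  have : Finite {S : Submodule Z M // IsAtom S} := Finite.of_injective m hinj
  have hx : ∀ S : {S : Submodule Z M // IsAtom S}, ∃ x ∈ S.1, x ≠ 0 :=
    fun S => Submodule.exists_mem_ne_zero_of_ne_bot S.2.1
  choose x hxS hx0 using hx
  obtain ⟨mu, hmu⟩ : ∃ mu : Module.Dual k₂ M, ∀ S, mu (x S) ≠ 0 := by
    exact Module.exists_dual_forall_apply_ne_zero x hx0
  refine ⟨mu, fun N hN => ?_⟩
  rcases IsAtomic.eq_bot_or_exists_atom_le N with h0 | ⟨S, hS, hSN⟩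
  · exact h0
  · exact absurd (hN _ (hSN (hxS ⟨S, hS⟩))) (hmu _)

theorem aux_ring {k₁ k₂ Z R : Type*} [Field k₁] [Field k₂] [Infinite k₂] [CommRing Z] [Ring R]
    [Algebra k₁ R] [Algebra k₂ R] [Algebra k₁ Z] [Algebra k₂ Z] [Algebra Z R]
    [IsScalarTower k₁ Z R] [IsScalarTower k₂ Z R] [FiniteDimensional k₁ Z]
    [FiniteDimensional k₁ R]
    (hsym : ∃ lam₁ : R →ₗ[k₁] k₁, (∀ r s : R, lam₁ (r * s) = lam₁ (s * r)) ∧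
      ∀ I : Ideal R, (I : Set R) ⊆ {x | lam₁ x = 0} → I = ⊥) :
    ∃ lam₂ : R →ₗ[k₂] k₂, (∀ r s : R, lam₂ (r * s) = lam₂ (s * r)) ∧
      ∀ I : Ideal R, (I : Set R) ⊆ {x | lam₂ x = 0} → I = ⊥ := by
  obtain ⟨lam, hc, hI⟩ := hsym
  let N : Submodule Z R :=
    { carrier := {x | ∀ z : Z, lam (z • x) = 0}
      add_mem' := fun {a b} ha hb z => by rw [smul_add, map_add, ha, hb, add_zero]
      zero_mem' := fun z => by simp
      smul_mem' := fun c x hx z => by rw [smul_smul]; exact hx _ }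
  let lamq : (R ⧸ N) →ₗ[k₁] k₁ := (N.restrictScalars k₁).liftQ lam (fun x hx => by
    have := hx 1
    rwa [one_smul] at this)
  have hq : ∀ x : R, lamq (N.mkQ x) = lam x := fun x => rfl
  obtain ⟨mu, hmu⟩ := aux_mod (k₂ := k₂) (Z := Z) lamq (by
    intro P hP
    rw [eq_bot_iff]
    intro y hy
    obtain ⟨x, rfl⟩ := N.mkQ_surjective y
    rw [Submodule.mem_bot]
    refine (Submodule.Quotient.mk_eq_zero N).2 fun z => ?_
    rw [← hq, map_smul]
    exact hP _ (P.smul_mem z hy))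
  refine ⟨mu ∘ₗ N.mkQ.restrictScalars k₂, fun r s => ?_, fun I hII => ?_⟩
  · have : N.mkQ (r * s) = N.mkQ (s * r) := by
      refine (Submodule.Quotient.eq N).2 fun z => ?_
      rw [smul_sub, map_sub, ← smul_mul_assoc, hc, mul_smul_comm, sub_self]
    simp only [LinearMap.comp_apply, LinearMap.restrictScalars_apply, this]
  · have h1 := hmu ((I.restrictScalars Z).map N.mkQ) (by
      rintro _ ⟨x, hx, rfl⟩
      exact hII hx)
    rw [eq_bot_iff, Submodule.map_le_iff_le_comap, Submodule.comap_bot] at h1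
    apply hI
    intro x hx
    have h2 : x ∈ N := by
      have := h1 hx
      rwa [Submodule.ker_mkQ] at this
    have := h2 1
    rwa [one_smul] at this

/-- **Corollary: being a symmetric algebra is independent of the field.**
Let `R` be a ring that is a finite-dimensional algebra over infinite fields `k₁` and `k₂`.
If `R` is a symmetric `k₁`-algebra then `R` is a symmetric `k₂`-algebra. -/
theorem symmetric_independent_of_field
    {k₁ k₂ R : Type*} [Field k₁] [Field k₂] [Infinite k₁] [Infinite k₂] [Ring R]
    [Algebra k₁ R] [Algebra k₂ R]
    [FiniteDimensional k₁ R] [FiniteDimensional k₂ R]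
    (hsym : ∃ lam₁ : R →ₗ[k₁] k₁, (∀ r s : R, lam₁ (r * s) = lam₁ (s * r)) ∧
      ∀ I : Ideal R, (I : Set R) ⊆ {x | lam₁ x = 0} → I = ⊥) :
    ∃ lam₂ : R →ₗ[k₂] k₂, (∀ r s : R, lam₂ (r * s) = lam₂ (s * r)) ∧
      ∀ I : Ideal R, (I : Set R) ⊆ {x | lam₂ x = 0} → I = ⊥ := by
  let _ : Algebra k₁ (Subring.center R) := ((algebraMap k₁ R).codRestrict (Subring.center R)
    (fun c => Subring.mem_center_iff.2 fun g => (Algebra.commutes c g).symm)).toAlgebra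
  let _ : Algebra k₂ (Subring.center R) := ((algebraMap k₂ R).codRestrict (Subring.center R)
    (fun c => Subring.mem_center_iff.2 fun g => (Algebra.commutes c g).symm)).toAlgebra
  let _ : Algebra (Subring.center R) R := Algebra.ofModule
    (fun r x y => smul_mul_assoc r x y)
    (fun r x y => by
      simp only [Subring.smul_def, smul_eq_mul]
      rw [← mul_assoc, ← mul_assoc, Subring.mem_center_iff.1 r.2 x])
  have : IsScalarTower k₁ (Subring.center R) R := ⟨fun a b c => by
    change (algebraMap k₁ R a * b) * c = a • ((b : R) * c)
    rw [mul_assoc, Algebra.smul_def]⟩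
  have : IsScalarTower k₂ (Subring.center R) R := ⟨fun a b c => by
    change (algebraMap k₂ R a * b) * c = a • ((b : R) * c)
    rw [mul_assoc, Algebra.smul_def]⟩
  have : FiniteDimensional k₁ (Subring.center R) := by
    let f : Subring.center R →ₗ[k₁] R :=
      { toFun := fun x => x
        map_add' := fun _ _ => rfl
        map_smul' := fun a b => by
          change algebraMap k₁ R a * b = a • (b : R)
          rw [Algebra.smul_def] }
    exact Module.Finite.of_injective f Subtype.val_injective
  exact aux_ring (Z := Subring.center R) hsym
end

section
/- Let R be a finite-dimensional algebra over a field k that is a symmetric k-algebra, i.e., there exists a k-linear functional λ : R → k with λ(r*s) = λ(s*r) for all r, s ∈ R and whose kernel contains no nonzero left ideals of R. Let J be the Jacobson radical of R, R̄ = R/J, and S = soc(_R R) the left socle of R. Then: (a) the commutator subgroup [R,R] contains no nonzero left ideals of R; and (b) S is a two-sided ideal of R and there is an additive bijection e : S → R̄ satisfying e(r * x) = r · e(x) and e(x * r) = e(x) · r for all r ∈ R, x ∈ S, i.e., S ≅ R̄ as (R,R)-bimodules. -/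
open scoped TensorProduct in
theorem aux_exists_trace (k A : Type*) [Field k] [Ring A] [Algebra k A] [FiniteDimensional k A]
    [Nontrivial A] :
    ∃ t : A →ₗ[k] k, (∀ a b, t (a * b) = t (b * a)) ∧ t ≠ 0 := by
  let K := AlgebraicClosure k
  let B := K ⊗[k] A
  have : IsArtinianRing B := IsArtinianRing.of_finite K B
  have : Nontrivial (B ⧸ Ring.jacobson B) := by
    rw [Ideal.Quotient.nontrivial_iff]
    exact (Ring.jacobson_lt_top B).ne
  obtain ⟨n, d, hd, ⟨e⟩⟩ :=
    IsSemisimpleRing.exists_algEquiv_pi_matrix_of_isAlgClosed K (B ⧸ Ring.jacobson B)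
  have hn : Nonempty (Fin n) := by
    by_contra h
    rw [not_nonempty_iff] at h
    have := e.injective.nontrivial
    exact not_subsingleton _ (inferInstance :
      Subsingleton ((i : Fin n) → Matrix (Fin (d i)) (Fin (d i)) K))
  obtain ⟨i⟩ := hn
  have := hd i
  let φ : B →ₐ[K] Matrix (Fin (d i)) (Fin (d i)) K :=
    ((Pi.evalAlgHom K (fun i => Matrix (Fin (d i)) (Fin (d i)) K) i).comp e.toAlgHom).comp
      (Ideal.Quotient.mkₐ K (Ring.jacobson B))
  have hφ : Function.Surjective φ := by
    refine (Function.Surjective.comp (Function.surjective_eval i) e.surjective).comp ?_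
    exact Ideal.Quotient.mk_surjective
  let T : B →ₗ[K] K := (Matrix.traceLinearMap (Fin (d i)) K K) ∘ₗ φ.toLinearMap
  have hT : ∀ a b, T (a * b) = T (b * a) := by
    intro a b
    simp only [T, LinearMap.comp_apply, AlgHom.toLinearMap_apply, map_mul,
      Matrix.traceLinearMap_apply]
    exact Matrix.trace_mul_comm _ _
  have hT0 : ∃ a : A, T (1 ⊗ₜ a) ≠ 0 := by
    by_contra! h
    have hz : T = 0 := by
      apply LinearMap.ext
      intro x
      induction x using TensorProduct.induction_on with
      | zero => simp
      | add x y hx hy => rw [map_add, hx, hy]; simp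
      | tmul c a =>
        have : (c ⊗ₜ[k] a : B) = c • ((1 : K) ⊗ₜ[k] a : B) := by
          rw [TensorProduct.smul_tmul']; simp
        rw [this, map_smul, h a]; simp
    obtain ⟨x, hx⟩ := hφ (Matrix.single 0 0 1)
    have h1 : T x = 1 := by
      simp [T, hx]
    rw [hz] at h1
    simp at h1
  obtain ⟨a, ha⟩ := hT0
  obtain ⟨l, hl⟩ := Module.Projective.exists_dual_ne_zero k ha
  let ι : A →ₐ[k] B := Algebra.TensorProduct.includeRight
  refine ⟨l ∘ₗ (T.restrictScalars k) ∘ₗ ι.toLinearMap, ?_, ?_⟩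
  · intro x y
    change l (T (ι (x * y))) = l (T (ι (y * x)))
    rw [map_mul ι, map_mul ι, hT]
  · intro h
    exact hl (LinearMap.congr_fun h a)

theorem aux_simple {k A : Type*} [Field k] [Ring A] [Algebra k A] [IsSimpleRing A]
    (t : A →ₗ[k] k) (ht : ∀ a b, t (a * b) = t (b * a)) (h0 : t ≠ 0) (a : A)
    (ha : ∀ b, t (a * b) = 0) : a = 0 := by
  let I : Ideal A :=
    { carrier := {a | ∀ b, t (a * b) = 0}
      add_mem' := by
        intro x y hx hy b
        rw [add_mul, map_add, hx b, hy b, add_zero]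
      zero_mem' := by intro b; simp
      smul_mem' := by
        intro c x hx b
        rw [smul_eq_mul, mul_assoc, ht, mul_assoc]
        exact hx _ }
  have hI : I.IsTwoSided := ⟨by
    intro x b hx c
    rw [mul_assoc]
    exact hx _⟩
  rcases (isSimpleRing_iff_isTwoSided_imp.mp ‹IsSimpleRing A›).2 I hI with h | h
  · have : a ∈ I := ha
    rw [h] at this
    simpa using this
  · exfalso
    apply h0
    ext b
    have : (1 : A) ∈ I := by rw [h]; trivial
    simpa using this b

theorem aux_semisimple (k A : Type*) [Field k] [Ring A] [Algebra k A] [FiniteDimensional k A]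
    [IsSemisimpleRing A] :
    ∃ t : A →ₗ[k] k, (∀ a b, t (a * b) = t (b * a)) ∧ ∀ a, (∀ b, t (a * b) = 0) → a = 0 := by
  obtain ⟨n, D, d, _, _, _, hd, ⟨e⟩⟩ :=
    IsSemisimpleRing.exists_algEquiv_pi_matrix_divisionRing_finite k A
  choose t ht h0 using fun i => aux_exists_trace k (Matrix (Fin (d i)) (Fin (d i)) (D i))
  refine ⟨(∑ i, (t i) ∘ₗ LinearMap.proj i) ∘ₗ e.toLinearMap, ?_, ?_⟩
  · intro a b
    simp only [LinearMap.comp_apply, LinearMap.sum_apply, AlgEquiv.toLinearMap_apply, map_mul,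
      LinearMap.proj_apply, Pi.mul_apply]
    exact Finset.sum_congr rfl fun i _ => ht i _ _
  · intro a ha
    apply e.injective
    rw [map_zero]
    funext i
    apply aux_simple (t i) (ht i) (h0 i)
    intro b
    have := ha (e.symm (Pi.single i b))
    simp only [LinearMap.comp_apply, LinearMap.sum_apply, AlgEquiv.toLinearMap_apply, map_mul,
      LinearMap.proj_apply, Pi.mul_apply, AlgEquiv.apply_symm_apply] at this
    rw [Finset.sum_eq_single i] at this
    · simpa using this
    · intro j _ hj
      rw [Pi.single_eq_of_ne hj]; simp
    · simp

theorem aux_rep {k A : Type*} [Field k] [Ring A] [Algebra k A] [FiniteDimensional k A]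
    (t : A →ₗ[k] k) (h : ∀ a, (∀ b, t (a * b) = 0) → a = 0) (g : A →ₗ[k] k) :
    ∃ a, ∀ b, g b = t (a * b) := by
  let F : A →ₗ[k] (A →ₗ[k] k) := (LinearMap.mul k A).compr₂ t
  have hF : Function.Injective F := by
    rw [injective_iff_map_eq_zero]
    intro a ha
    apply h
    intro b
    exact LinearMap.congr_fun ha b
  have hs : Function.Surjective F :=
    (LinearMap.injective_iff_surjective_of_finrank_eq_finrank
      (Subspace.dual_finrank_eq (K := k) (V := A)).symm).1 hF
  obtain ⟨a, ha⟩ := hs g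
  exact ⟨a, fun b => by rw [← ha]; rfl⟩

/-- Let `R` be a symmetric algebra over a field `k`, witnessed by a
`k`-linear functional `λ` with `λ(rs) = λ(sr)` whose kernel contains no nonzero left
ideals.  Let `J` be the Jacobson radical, `R̄ = R/J` and `S = soc(_R R)`.  Then
(a) `[R,R]` contains no nonzero left ideals of `R`; and
(b) `S` is a two-sided ideal and `S ≅ R̄` as `(R,R)`-bimodules, i.e. there is an additive
bijection `e : S → R̄` with `e (r * x) = r • e x` and `e (x * r) = e x · r` (the right
action on `R̄` being induced by right multiplication on representatives). -/
theorem symmetric_algebra_socle_bimodule_iso_and_commutators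
    {k R : Type*} [Field k] [Ring R] [Algebra k R] [FiniteDimensional k R]
    (lam : R →ₗ[k] k) (hsymm : ∀ r s : R, lam (r * s) = lam (s * r))
    (hker : ∀ I : Ideal R, (I : Set R) ⊆ {x | lam x = 0} → I = ⊥) :
    (∀ I : Ideal R, (I : Set R) ⊆ (commutatorSubgroup R : Set R) → I = ⊥) ∧
    (∀ x ∈ leftSocle R, ∀ r : R, x * r ∈ leftSocle R) ∧
    ∃ e : leftSocle R ≃+ (R ⧸ Ideal.jacobson (⊥ : Ideal R)),
      (∀ (r : R) (x : leftSocle R), e (r • x) = r • e x) ∧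
      (∀ (x : leftSocle R) (r : R) (hxr : (x : R) * r ∈ leftSocle R) (y : R),
        e x = Submodule.Quotient.mk y →
          e ⟨(x : R) * r, hxr⟩ = Submodule.Quotient.mk (y * r)) := by
  refine ⟨?_, ?_⟩
  · intro I hI
    apply hker
    intro x hx
    have hx' : x ∈ commutatorSubgroup R := hI hx
    have hle : commutatorSubgroup R ≤ lam.toAddMonoidHom.ker := by
      rw [commutatorSubgroup, AddSubgroup.closure_le]
      rintro _ ⟨r, s, rfl⟩
      simp [AddMonoidHom.mem_ker, hsymm r s]
    exact hle hx'
  have hnd : ∀ a, (∀ b, lam (a * b) = 0) → a = 0 := by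
    intro a ha
    have : Ideal.span {a} = ⊥ := by
      apply hker
      intro x hx
      obtain ⟨c, rfl⟩ := Ideal.mem_span_singleton'.1 hx
      change lam _ = 0
      rw [hsymm]; exact ha c
    simpa using this
  have : IsArtinianRing R := IsArtinianRing.of_finite k R
  obtain ⟨t, ht, htn⟩ := aux_semisimple k (R ⧸ Ring.jacobson R)
  let π : R →ₐ[k] (R ⧸ Ring.jacobson R) := Ideal.Quotient.mkₐ k (Ring.jacobson R)
  have hπ : Function.Surjective π := Ideal.Quotient.mk_surjective
  have hπ0 : ∀ x, π x = 0 ↔ x ∈ Ring.jacobson R := fun x => Ideal.Quotient.eq_zero_iff_mem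
  obtain ⟨z, hz⟩ := aux_rep lam hnd (t ∘ₗ π.toLinearMap)
  replace hz : ∀ b, t (π b) = lam (z * b) := hz
  have hc : ∀ r, r * z = z * r := by
    intro r
    rw [← sub_eq_zero]
    apply hnd
    intro b
    rw [sub_mul, map_sub, mul_assoc r, hsymm r, mul_assoc, mul_assoc, ← hz, ← hz, map_mul π,
      map_mul π, ht, sub_self]
  let f : R →ₗ[R] R := LinearMap.toSpanSingleton R R z
  have hf : ∀ r, f r = r * z := fun r => rfl
  have hker' : LinearMap.ker f = Ring.jacobson R := by
    ext r
    rw [LinearMap.mem_ker, hf, ← hπ0]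
    constructor
    · intro h
      apply htn
      intro b
      obtain ⟨b, rfl⟩ := hπ b
      rw [← map_mul, hz, ← mul_assoc, ← hc, h]; simp
    · intro h
      apply hnd
      intro b
      rw [hc, mul_assoc, ← hz, map_mul, h]; simp
  let E := (Submodule.quotEquivOfEq _ _ hker').symm.trans f.quotKerEquivRange
  have hrange : LinearMap.range f = leftSocle R := by
    apply le_antisymm
    · have hss : IsSemisimpleModule R (R ⧸ Ring.jacobson R) := by
        have : RingHomSurjective (Ideal.Quotient.mk (Ring.jacobson R)) :=
          ⟨Ideal.Quotient.mk_surjective⟩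
        let l : (R ⧸ Ring.jacobson R) →ₛₗ[Ideal.Quotient.mk (Ring.jacobson R)]
            (R ⧸ Ring.jacobson R) :=
          { toFun := id
            map_add' := fun _ _ => rfl
            map_smul' := by
              intro r x
              obtain ⟨x, rfl⟩ := Ideal.Quotient.mk_surjective x
              rfl }
        exact (l.isSemisimpleModule_iff_of_bijective Function.bijective_id).2
          (inferInstance : IsSemisimpleRing (R ⧸ Ring.jacobson R))
      have : IsSemisimpleModule R (LinearMap.range f) := E.isSemisimpleModule_iff.1 hss
      have h2 := IsSemisimpleModule.sSup_simples_eq_top R (LinearMap.range f)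
      have h3 := congrArg (Submodule.map (LinearMap.range f).subtype) h2
      rw [Submodule.map_top, Submodule.range_subtype, sSup_eq_iSup', Submodule.map_iSup] at h3
      rw [← h3]
      apply iSup_le
      rintro ⟨m, hm⟩
      apply le_sSup
      have hm' : IsSimpleModule R m := hm
      exact IsSimpleModule.congr (Submodule.equivMapOfInjective _
        (Submodule.injective_subtype _) m).symm
    · apply sSup_le
      intro I hI x hx
      have hI' : IsSimpleModule R I := hI
      have hJ : ∀ j ∈ Ring.jacobson R, j * x = 0 := by
        intro j hj
        have := IsSemisimpleModule.jacobson_le_annihilator R I hj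
        rw [Module.mem_annihilator] at this
        exact congrArg Subtype.val (this ⟨x, hx⟩)
      obtain ⟨s, hs⟩ := LinearMap.exists_rightInverse_of_surjective π.toLinearMap
        (LinearMap.range_eq_top.2 hπ)
      let g' : (R ⧸ Ring.jacobson R) →ₗ[k] k := lam ∘ₗ LinearMap.mulLeft k x ∘ₗ s
      obtain ⟨a, ha⟩ := aux_rep t htn g'
      obtain ⟨a, rfl⟩ := hπ a
      refine ⟨a, ?_⟩
      rw [hf, ← sub_eq_zero]
      apply hnd
      intro b
      rw [sub_mul, map_sub, hc, mul_assoc, ← hz, map_mul, ← ha]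
      have : g' (π b) = lam (x * b) := by
        have h4 : π (s (π b)) = π b := LinearMap.congr_fun hs (π b)
        have h5 : s (π b) - b ∈ Ring.jacobson R := by
          rw [← hπ0, map_sub, h4, sub_self]
        change lam (x * s (π b)) = _
        rw [← sub_eq_zero, ← map_sub, ← mul_sub, hsymm, hJ _ h5, map_zero]
      rw [this, sub_self]
  refine ⟨?_, ?_⟩
  · intro x hx r
    rw [← hrange] at hx ⊢
    obtain ⟨a, rfl⟩ := hx
    refine ⟨a * r, ?_⟩
    rw [hf, hf, mul_assoc, mul_assoc, hc]
  · let E' : (R ⧸ Ideal.jacobson (⊥ : Ideal R)) ≃ₗ[R] leftSocle R :=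
      ((Submodule.quotEquivOfEq _ _ (hker'.trans Ideal.jacobson_bot.symm)).symm.trans
        f.quotKerEquivRange).trans (LinearEquiv.ofEq _ _ hrange)
    have hE' : ∀ y : R, ((E' (Submodule.Quotient.mk y) : leftSocle R) : R) = y * z :=
      fun y => rfl
    refine ⟨E'.symm.toAddEquiv, fun r x => E'.symm.map_smul r x, ?_⟩
    intro x r hxr y hy
    change E'.symm x = _ at hy
    change E'.symm _ = _
    rw [LinearEquiv.symm_apply_eq] at hy ⊢
    apply Subtype.ext
    have hy' : (x : R) = y * z := by rw [hy, hE']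
    rw [hE']
    change (x : R) * r = _
    rw [hy', mul_assoc, mul_assoc, hc]
end

section
/- Let R be a finite-dimensional algebra over an infinite field k, let J be the Jacobson radical of R, R̄ = R/J, and S = soc(_R R) the left socle of R. Suppose that S is isomorphic to R̄ as (R,R)-bimodules (there is an additive bijection e : S → R̄ with e(r * x) = r · e(x) and e(x * r) = e(x) · r for all r ∈ R, x ∈ S) and that the commutator subgroup [R,R] contains no nonzero left ideals of R. Then R is a symmetric k-algebra: there exists a k-linear functional λ : R → k with λ(r*s) = λ(s*r) for all r, s ∈ R and whose kernel contains no nonzero left ideals of R. -/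
/-- Let `R` be a finite-dimensional algebra over an infinite field `k`,
`J` its Jacobson radical, `R̄ = R/J`, and `S = soc(_R R)` the left socle.  Suppose `S` is a
two-sided ideal and `S ≅ R̄` as `(R,R)`-bimodules (there is an additive bijection
`e : S → R̄` with `e (r * x) = r • e x` and `e (x * r) = e x · r`, the right action on `R̄`
being induced by right multiplication on representatives), and suppose `[R,R]` contains no
nonzero left ideals of `R`.  Then `R` is a symmetric `k`-algebra: there is a `k`-linear
functional `λ : R → k` with `λ(rs) = λ(sr)` for all `r, s` whose kernel contains no nonzero
left ideals of `R`. -/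
theorem symmetric_of_socle_bimodule_iso_and_commutators
    {k R : Type*} [Field k] [Infinite k] [Ring R] [Algebra k R] [FiniteDimensional k R]
    (hS2 : ∀ x ∈ leftSocle R, ∀ r : R, x * r ∈ leftSocle R)
    (e : leftSocle R ≃+ (R ⧸ Ideal.jacobson (⊥ : Ideal R)))
    (he₁ : ∀ (r : R) (x : leftSocle R), e (r • x) = r • e x)
    (he₂ : ∀ (x : leftSocle R) (r : R) (hxr : (x : R) * r ∈ leftSocle R) (y : R),
      e x = Submodule.Quotient.mk y →
        e ⟨(x : R) * r, hxr⟩ = Submodule.Quotient.mk (y * r))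
    (hcomm : ∀ I : Ideal R, (I : Set R) ⊆ (commutatorSubgroup R : Set R) → I = ⊥) :
    ∃ lam : R →ₗ[k] k, (∀ r s : R, lam (r * s) = lam (s * r)) ∧
      ∀ I : Ideal R, (I : Set R) ⊆ {x | lam x = 0} → I = ⊥ := by
  classical
  have hart : IsArtinianRing R := IsArtinianRing.of_finite k R
  have hnoeth : IsNoetherianRing R := inferInstance
  have hss : IsSemisimpleModule R (leftSocle R) := by
    rw [leftSocle, sSup_eq_iSup]
    refine isSemisimpleModule_biSup_of_isSemisimpleModule_submodule fun m hm => ?_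
    have : IsSimpleModule R m := hm
    infer_instance
  -- every endomorphism of the socle is a right multiplication
  have hend : ∀ f : Module.End R (leftSocle R), ∃ a : R, ∀ x, (f x : R) = (x : R) * a := by
    intro f
    obtain ⟨u, hu⟩ := e.surjective (Submodule.Quotient.mk 1)
    have hgen : ∀ (x : leftSocle R) (y : R), e x = Submodule.Quotient.mk y → x = y • u := by
      intro x y hxy
      apply e.injective
      rw [he₁, hu, hxy, ← Submodule.Quotient.mk_smul, smul_eq_mul, mul_one]
    obtain ⟨a, ha⟩ := Submodule.Quotient.mk_surjective _ (e (f u))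
    have h1 := hgen _ _ ha.symm
    have h2 : (⟨(u : R) * a, hS2 _ u.2 a⟩ : leftSocle R) = a • u := by
      apply hgen
      rw [he₂ u a _ 1 hu, one_mul]
    refine ⟨a, fun x => ?_⟩
    obtain ⟨y, hy⟩ := Submodule.Quotient.mk_surjective _ (e x)
    have hx := hgen _ _ hy.symm
    have h3 : (f u : R) = u * a := by
      rw [h1, ← h2]
    rw [hx, map_smul]
    simp [h3, mul_assoc]
  -- the commutator subspace
  let C : Submodule k R :=
    { commutatorSubgroup R with
      smul_mem' := by
        intro c x hx
        change x ∈ commutatorSubgroup R at hx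
        change c • x ∈ commutatorSubgroup R
        induction hx using AddSubgroup.closure_induction with
        | mem x hx =>
          obtain ⟨r, s, rfl⟩ := hx
          refine AddSubgroup.subset_closure ⟨c • r, s, ?_⟩
          simp [smul_sub]
        | zero => simp [zero_mem]
        | add x y _ _ h1 h2 => rw [smul_add]; exact add_mem h1 h2
        | neg x _ h => rw [smul_neg]; exact neg_mem h }
  have hex : ∀ c : isotypicComponents R (leftSocle R), ∃ x : leftSocle R, x ∈ c.1 ∧ (x : R) ∉ C := by
    intro c
    by_contra! h
    have hb := hcomm (c.1.map (leftSocle R).subtype) (by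
      rintro _ ⟨x, hx, rfl⟩
      exact h x hx)
    replace hb := Submodule.map_injective_of_injective (leftSocle R).subtype_injective
      (hb.trans (Submodule.map_bot _).symm)
    exact (bot_lt_isotypicComponents c.2).ne' hb
  choose v hv hvC using hex
  obtain ⟨g, hg⟩ := Module.exists_dual_forall_apply_ne_zero (K := k)
    (fun c => C.mkQ (v c : R)) (by
      intro c h
      exact hvC c ((Submodule.Quotient.mk_eq_zero C).1 h))
  let lam : R →ₗ[k] k := g ∘ₗ C.mkQ
  have htr : ∀ r s : R, lam (r * s) = lam (s * r) := by
    intro r s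
    rw [← sub_eq_zero, ← map_sub]
    have : C.mkQ (r * s - s * r) = 0 :=
      (Submodule.Quotient.mk_eq_zero C).2 (AddSubgroup.subset_closure ⟨r, s, rfl⟩)
    rw [LinearMap.comp_apply, this, map_zero]
  refine ⟨lam, htr, fun I hI => ?_⟩
  by_contra hne
  obtain ⟨L, hL, hLI⟩ := (IsAtomic.eq_bot_or_exists_atom_le I).resolve_left hne
  rw [← isSimpleModule_iff_isAtom] at hL
  have hLS : L ≤ leftSocle R := le_sSup hL
  let N : Submodule R (leftSocle R) :=
    { carrier := {x | ∀ r : R, lam (r * x) = 0}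
      add_mem' := by
        intro a b ha hb r
        simp [mul_add, ha r, hb r]
      zero_mem' := by intro r; simp
      smul_mem' := by
        intro c x hx r
        have := hx (r * c)
        simpa [mul_assoc] using this }
  have hN : N.IsFullyInvariant := by
    intro f x hx r
    obtain ⟨a, ha⟩ := hend f
    rw [ha, ← mul_assoc, htr, ← mul_assoc]
    exact hx (a * r)
  let L' : Submodule R (leftSocle R) := Submodule.comap (leftSocle R).subtype L
  have hL' : IsSimpleModule R L' := by
    exact IsSimpleModule.congr (Submodule.comapSubtypeEquivOfLe hLS)
  have hL'N : L' ≤ N := fun x hx r => hI (hLI (L.smul_mem r hx))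
  have hle := (isFullyInvariant_iff_le_imp_isotypicComponent_le.1 hN) L' hL'N
  let c : isotypicComponents R (leftSocle R) := ⟨_, L', hL', rfl⟩
  apply hg c
  have := hle (hv c) 1
  rwa [one_mul] at this
end

section
/- Let R be a finite-dimensional algebra over a field k and let S = soc(_R R) be its left socle. Let H' be a k-subspace of S of codimension 1 in S which contains no nonzero left ideals of R, and let C be a k-subspace of R with C ∩ S ⊆ H'. Then there exists a k-subspace H of R of codimension 1 in R (a hyperplane) such that C ⊆ H, H ∩ S = H', and H contains no nonzero left ideals of R. -/
/-- Let `R` be a finite-dimensional algebra over a field `k` with left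
socle `S`.  Let `H'` be a `k`-subspace of `S` of codimension 1 in `S` containing no
nonzero left ideals of `R`, and let `C` be a `k`-subspace of `R` with `C ∩ S ⊆ H'`.  Then
there is a `k`-hyperplane `H` of `R` (a subspace of codimension 1) with `C ⊆ H`,
`H ∩ S = H'`, and such that `H` contains no nonzero left ideals of `R`. -/
theorem extend_socle_hyperplane
    {k R : Type*} [Field k] [Ring R] [Algebra k R] [FiniteDimensional k R]
    (H' : Submodule k R) (hH'S : H' ≤ (leftSocle R).restrictScalars k)
    (hcodim : Module.finrank k ((leftSocle R).restrictScalars k) = Module.finrank k H' + 1)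
    (hH' : ∀ I : Ideal R, (I : Set R) ⊆ (H' : Set R) → I = ⊥)
    (C : Submodule k R) (hC : C ⊓ (leftSocle R).restrictScalars k ≤ H') :
    ∃ H : Submodule k R, C ≤ H ∧ H ⊓ (leftSocle R).restrictScalars k = H' ∧
      Module.finrank k (R ⧸ H) = 1 ∧
      ∀ I : Ideal R, (I : Set R) ⊆ (H : Set R) → I = ⊥ := by
  set S := (leftSocle R).restrictScalars k with hS
  have hlt : H' < S := by
    refine lt_of_le_of_ne hH'S ?_
    intro h
    rw [← h] at hcodim
    omega
  obtain ⟨s, hsS, hsH⟩ := SetLike.exists_of_lt hlt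
  have hD : s ∉ H' ⊔ C := by
    intro h
    have h1 : s ∈ (H' ⊔ C) ⊓ S := ⟨h, hsS⟩
    rw [sup_inf_assoc_of_le C hH'S] at h1
    exact hsH ((sup_le le_rfl hC) h1)
  obtain ⟨f, hfs, hf⟩ := Submodule.exists_le_ker_of_notMem hD
  have hHS : LinearMap.ker f ⊓ S = H' := by
    have hle : H' ≤ LinearMap.ker f ⊓ S := le_inf (le_sup_left.trans hf) hH'S
    have hlt2 : LinearMap.ker f ⊓ S < S := by
      refine lt_of_le_of_ne inf_le_right ?_
      intro h
      rw [← h] at hsS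
      exact hfs hsS.1
    have h3 := Submodule.finrank_lt_finrank_of_lt hlt2
    exact (Submodule.eq_of_le_of_finrank_le hle (by omega)).symm
  refine ⟨LinearMap.ker f, le_sup_right.trans hf, hHS, ?_, ?_⟩
  · have hsurj : Function.Surjective f := LinearMap.surjective (by
      rintro rfl
      exact hfs rfl)
    rw [(f.quotKerEquivOfSurjective hsurj).finrank_eq, Module.finrank_self]
  · intro I hI
    have : IsArtinianRing R := IsArtinianRing.of_finite k R
    rcases IsAtomic.eq_bot_or_exists_atom_le I with h | ⟨A, hA, hAI⟩
    · exact h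
    · exfalso
      have hsimp : IsSimpleModule R A := isSimpleModule_iff_isAtom.mpr hA
      have hAS : A ≤ leftSocle R := le_sSup hsimp
      refine hA.1 (hH' A ?_)
      intro x hx
      rw [← hHS]
      exact ⟨hI (hAI hx), hAS hx⟩
end
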